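/- arXiv:1403.4967 — 12 statements merged into one kernel-verified Lean document; each statement's English description precedes it below -/
import Mathlib

section
/- Let (S, ℒ) be a partial linear space and k ≥ 1 an integer. Then the Veronese space V_k(S, ℒ) is again a partial linear space: its block family is nonempty, every block of V_k(S, ℒ) has at least 3 points, and any two distinct points of 𝔶_k(S) belong to at most one common block. -/
def veroBlock {S : Type*} (e : Multiset S) (r : ℕ) (B : Set S) : Set (Multiset S) :=
  { m | ∃ x ∈ B, m = e + Multiset.replicate r x }

def veroBlocks {S : Type*} (k : ℕ) (L : Set (Set S)) : Set (Set (Multiset S)) :=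
  { Bl | ∃ (r : ℕ) (e : Multiset S) (B : Set S),
      0 < r ∧ r ≤ k ∧ Multiset.card e = k - r ∧ B ∈ L ∧ Bl = veroBlock e r B }

def veroPoints (S : Type*) (k : ℕ) : Set (Multiset S) :=
  { m | Multiset.card m = k }

def veroLeaves (S : Type*) (k : ℕ) : Set (Set (Multiset S)) :=
  { T | ∃ (r : ℕ) (e : Multiset S),
      0 < r ∧ r ≤ k ∧ Multiset.card e = k - r ∧ T = veroBlock e r Set.univ }

def VerAdj {S : Type*} (k : ℕ) (L : Set (Set S)) (f g : Multiset S) : Prop :=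
  ∃ Bl ∈ veroBlocks k L, f ∈ Bl ∧ g ∈ Bl

def AtLeastThree {α : Type*} (B : Set α) : Prop :=
  ∃ a b c, a ∈ B ∧ b ∈ B ∧ c ∈ B ∧ a ≠ b ∧ a ≠ c ∧ b ≠ c

def IsPLS {α : Type*} (L : Set (Set α)) : Prop :=
  L.Nonempty ∧ (∀ B ∈ L, AtLeastThree B) ∧
    ∀ p q : α, p ≠ q → ∀ B₁ ∈ L, ∀ B₂ ∈ L,
      p ∈ B₁ → q ∈ B₁ → p ∈ B₂ → q ∈ B₂ → B₁ = B₂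

def IsLinearSpace {α : Type*} (L : Set (Set α)) : Prop :=
  IsPLS L ∧ ∀ p q : α, p ≠ q → ∃ B ∈ L, p ∈ B ∧ q ∈ B

def IsSubspace {α : Type*} (Blk : Set (Set α)) (X : Set α) : Prop :=
  ∀ B ∈ Blk, (∃ p ∈ B ∩ X, ∃ q ∈ B ∩ X, p ≠ q) → B ⊆ X

def IsHyperplane {α : Type*} (L : Set (Set α)) (X : Set α) : Prop :=
  IsSubspace L X ∧ (∀ B ∈ L, (B ∩ X).Nonempty) ∧ X ≠ Set.univ

def Veblenian {α : Type*} (L : Set (Set α)) : Prop :=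
  ∀ (p : α) (L₁ L₂ M₁ M₂ : Set α), L₁ ∈ L → L₂ ∈ L → M₁ ∈ L → M₂ ∈ L →
    L₁ ≠ L₂ → L₁ ≠ M₁ → L₁ ≠ M₂ → L₂ ≠ M₁ → L₂ ≠ M₂ → M₁ ≠ M₂ →
    p ∈ L₁ → p ∈ L₂ → p ∉ M₁ → p ∉ M₂ →
    (L₁ ∩ M₁).Nonempty → (L₁ ∩ M₂).Nonempty →
    (L₂ ∩ M₁).Nonempty → (L₂ ∩ M₂).Nonempty →
    (M₁ ∩ M₂).Nonempty

def IsVeroHyperplane {S : Type*} (k : ℕ) (L : Set (Set S)) (X : Set (Multiset S)) : Prop :=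
  X ⊆ veroPoints S k ∧ X ≠ veroPoints S k ∧
    IsSubspace (veroBlocks k L) X ∧ ∀ B ∈ veroBlocks k L, (B ∩ X).Nonempty

def addPt {S : Type*} (a : S) (m : Set S) : Set (Multiset S) :=
  { t | ∃ x ∈ m, t = ({a, x} : Multiset S) }

def dbl {S : Type*} (m : Set S) : Set (Multiset S) :=
  { t | ∃ x ∈ m, t = ({x, x} : Multiset S) }

theorem stmt_0 {S : Type*} (ℒ : Set (Set S)) (hL : IsPLS ℒ) (k : ℕ) (hk : 1 ≤ k) :
    (veroBlocks k ℒ).Nonempty ∧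
    (∀ Bl ∈ veroBlocks k ℒ, AtLeastThree Bl) ∧
    (∀ f g : Multiset S, f ∈ veroPoints S k → g ∈ veroPoints S k → f ≠ g →
      ∀ B₁ ∈ veroBlocks k ℒ, ∀ B₂ ∈ veroBlocks k ℒ,
        f ∈ B₁ → g ∈ B₁ → f ∈ B₂ → g ∈ B₂ → B₁ = B₂) := by
  classical
  obtain ⟨⟨B0, hB0⟩, h3, hu⟩ := hL
  have inj : ∀ (e : Multiset S) (r : ℕ) (x y : S), 0 < r → x ≠ y →
      e + Multiset.replicate r x ≠ e + Multiset.replicate r y := by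
    intro e r x y hr hxy h
    have h1 := congrArg (Multiset.count x) (add_left_cancel h)
    simp only [Multiset.count_replicate, if_neg hxy.symm, if_true] at h1
    omega
  refine ⟨?_, ?_, ?_⟩
  · obtain ⟨a, b, c, ha, -⟩ := h3 B0 hB0
    exact ⟨_, 1, Multiset.replicate (k - 1) a, B0, one_pos, hk, by simp, hB0, rfl⟩
  · rintro _ ⟨r, e, B, hr, hrk, he, hB, rfl⟩
    obtain ⟨a, b, c, ha, hb, hc, hab, hac, hbc⟩ := h3 B hB
    exact ⟨_, _, _, ⟨a, ha, rfl⟩, ⟨b, hb, rfl⟩, ⟨c, hc, rfl⟩, inj e r a b hr hab,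
      inj e r a c hr hac, inj e r b c hr hbc⟩
  · rintro f g - - hfg _ ⟨r, e, B, hr, -, -, hB, rfl⟩ _ ⟨s, d, C, hs, -, -, hC, rfl⟩
      ⟨x, hx, hfx⟩ ⟨y, hy, hgy⟩ ⟨z, hz, hfz⟩ ⟨w, hw, hgw⟩
    have hxy : x ≠ y := by rintro rfl; exact hfg (hfx.trans hgy.symm)
    have hzw : z ≠ w := by rintro rfl; exact hfg (hfz.trans hgw.symm)
    have e1 := hfx.symm.trans hfz
    have e2 := hgy.symm.trans hgw
    have key : ∀ a : S, (if x = a then r else 0) + (if w = a then s else 0)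
        = (if z = a then s else 0) + (if y = a then r else 0) := by
      intro a
      have h1 := congrArg (Multiset.count a) e1
      have h2 := congrArg (Multiset.count a) e2
      simp only [Multiset.count_add, Multiset.count_replicate] at h1 h2
      omega
    have hzx : z = x := by
      by_contra h
      have := key x
      simp only [if_true, if_neg h, if_neg hxy.symm] at this
      omega
    subst hzx
    have hwy : w = y := by
      by_contra h
      have := key y
      simp only [if_true, if_neg h, if_neg hxy] at this
      omega
    subst hwy
    have hrs : r = s := by
      have := key z
      simp only [if_true, if_neg hxy.symm] at this
      omega
    subst hrs
    have hed : e = d := add_right_cancel e1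
    subst hed
    rw [hu z w hxy B hB C hC hx hy hz hw]
end

section
/- Let (S, ℬ) be an incidence structure, where ℬ is a family of subsets of S, and let k ≥ 1. Let B = {e₀ + r·x : x ∈ B₀} be a block of V_k(S, ℬ), where 0 < r ≤ k, e₀ ∈ 𝔶_{k-r}(S), B₀ ∈ ℬ, and let T(B) = {e₀ + r·x : x ∈ S} be the leaf containing B. If a point f ∈ 𝔶_k(S) is adjacent in V_k(S, ℬ) to at least three pairwise distinct points of B, then f ∈ T(B). -/
theorem adj_form {S : Type*} {k : ℕ} {L : Set (Set S)} {f p : Multiset S} (h : VerAdj k L f p) :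
    ∃ (s : ℕ) (e : Multiset S) (u v : S), 0 < s ∧ f = e + Multiset.replicate s u ∧
      p = e + Multiset.replicate s v := by
  obtain ⟨Bl, ⟨s, e, B, hs, -, -, -, rfl⟩, ⟨u, -, hu⟩, ⟨v, -, hv⟩⟩ := h
  exact ⟨s, e, u, v, hs, hu, hv⟩

open Classical in
theorem key_aux {S : Type*} (g : S → ℤ) (r s t : ℤ) (hr : 0 < r) (hs : 0 < s) (ht : 0 < t)
    (x y u v a b : S) (hxy : x ≠ y) (huv : u ≠ v) (hn : ¬ (x = v ∧ s = r))
    (h1 : ∀ z, g z = (if z = x then r else 0) + (if z = u then s else 0) - (if z = v then s else 0))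
    (h2 : ∀ z, g z = (if z = y then r else 0) + (if z = a then t else 0) - (if z = b then t else 0)) :
    y = if x = u then v else u := by
  have hp : ∀ z w, z ≠ w → g z - (if z = y then r else 0) > 0 →
      g w - (if w = y then r else 0) > 0 → False := by
    intro z w hzw p q
    rw [h2] at p q
    grind
  have hm : ∀ z w, z ≠ w → g z - (if z = y then r else 0) < 0 →
      g w - (if w = y then r else 0) < 0 → False := by
    intro z w hzw p q
    rw [h2] at p q
    grind
  clear h2
  have ex := h1 x
  have ey := h1 y
  have eu := h1 u
  have ev := h1 v
  have p1 := hp x u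
  have m1 := hm x y
  have m2 := hm v y
  clear h1 hp hm
  by_cases c1 : x = u
  · subst c1
    grind
  · by_cases c2 : x = v
    · subst c2
      grind
    · grind

theorem stmt_2 {S : Type*} (ℬ : Set (Set S)) (k r : ℕ) (hr : 0 < r) (hrk : r ≤ k)
    (e₀ : Multiset S) (he₀ : Multiset.card e₀ = k - r)
    (B₀ : Set S) (hB₀ : B₀ ∈ ℬ)
    (f p₁ p₂ p₃ : Multiset S) (hf : f ∈ veroPoints S k)
    (hp₁ : p₁ ∈ veroBlock e₀ r B₀) (hp₂ : p₂ ∈ veroBlock e₀ r B₀)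
    (hp₃ : p₃ ∈ veroBlock e₀ r B₀)
    (h12 : p₁ ≠ p₂) (h13 : p₁ ≠ p₃) (h23 : p₂ ≠ p₃)
    (ha₁ : VerAdj k ℬ f p₁) (ha₂ : VerAdj k ℬ f p₂) (ha₃ : VerAdj k ℬ f p₃) :
    f ∈ veroBlock e₀ r Set.univ := by
  classical
  obtain ⟨x₁, -, rfl⟩ := hp₁
  obtain ⟨x₂, -, rfl⟩ := hp₂
  obtain ⟨x₃, -, rfl⟩ := hp₃
  obtain ⟨s₁, e₁, u₁, v₁, hs₁, f₁, q₁⟩ := adj_form ha₁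
  obtain ⟨s₂, e₂, u₂, v₂, hs₂, f₂, q₂⟩ := adj_form ha₂
  obtain ⟨s₃, e₃, u₃, v₃, hs₃, f₃, q₃⟩ := adj_form ha₃
  by_cases huv : u₁ = v₁
  · subst huv
    exact ⟨x₁, trivial, by rw [f₁, q₁]⟩
  by_cases hn : x₁ = v₁ ∧ s₁ = r
  · obtain ⟨rfl, rfl⟩ := hn
    have := add_right_cancel q₁
    exact ⟨u₁, trivial, by rw [f₁, this]⟩
  exfalso
  have form : ∀ (s : ℕ) (e : Multiset S) (x u v : S), f = e + Multiset.replicate s u →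
      e₀ + Multiset.replicate r x = e + Multiset.replicate s v →
      ∀ z, ((f.count z : ℤ) - e₀.count z) = (if z = x then (r : ℤ) else 0) +
        (if z = u then (s : ℤ) else 0) - (if z = v then (s : ℤ) else 0) := by
    intro s e x u v h1 h2 z
    have h3 := congrArg (Multiset.count z) h1
    have h4 := congrArg (Multiset.count z) h2
    simp only [Multiset.count_add, Multiset.count_replicate] at h3 h4
    grind
  have F₁ := form _ _ _ _ _ f₁ q₁
  have F₂ := form _ _ _ _ _ f₂ q₂
  have F₃ := form _ _ _ _ _ f₃ q₃
  have A := key_aux _ r s₁ s₂ (by omega) (by omega) (by omega) x₁ x₂ u₁ v₁ u₂ v₂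
    (fun h => h12 (by rw [h])) huv (by simpa using hn) (fun z => by convert F₁ z) (fun z => by convert F₂ z)
  have B := key_aux _ r s₁ s₃ (by omega) (by omega) (by omega) x₁ x₃ u₁ v₁ u₃ v₃
    (fun h => h13 (by rw [h])) huv (by simpa using hn) (fun z => by convert F₁ z) (fun z => by convert F₃ z)
  exact h23 (by rw [A, B])
end

section
/- If a partial linear space (S, ℒ) is veblenian, then the Veronese space V_2(S, ℒ) is veblenian as well. -/
def vpt {S : Type*} : Option S → S → Multiset S
  | some a, x => {a, x}
  | none, x => {x, x}

def vco {S : Type*} (d : S) : Option S → Option S → S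
  | some _, some b => b
  | some a, none => a
  | none, some b => b
  | none, none => d

theorem vpair {S : Type*} (a b c d : S) :
    (({a, b} : Multiset S) = {c, d}) ↔ (a = c ∧ b = d) ∨ (a = d ∧ b = c) := by
  change ((a ::ₘ {b} : Multiset S) = c ::ₘ {d}) ↔ _
  rw [Multiset.cons_eq_cons]
  constructor
  · rintro (⟨h, h'⟩ | ⟨h, cs, h1, h2⟩)
    · left; exact ⟨h, by simpa using h'⟩
    · right
      have := congrArg Multiset.card h1
      simp at this
      subst this
      simp at h1 h2
      exact ⟨h2.symm, h1⟩
  · rintro (⟨rfl, rfl⟩ | ⟨rfl, rfl⟩)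
    · simp
    · by_cases h : a = b
      · subst h; simp
      · right; exact ⟨h, 0, by simp, by simp⟩

theorem vpt_eq {S : Type*} (d : S) (i j : Option S) (x y : S) (h : vpt i x = vpt j y) :
    (i = j ∧ x = y) ∨ (i ≠ j ∧ x = vco d i j ∧ y = vco d j i) := by
  rcases i with _ | a <;> rcases j with _ | b <;> simp only [vpt, vco, vpair] at * <;> grind

theorem vpt_co {S : Type*} (d : S) (i j : Option S) (h : i ≠ j) :
    vpt i (vco d i j) = vpt j (vco d j i) := by
  rcases i with _ | a <;> rcases j with _ | b <;> simp only [vpt, vco, vpair] at * <;> grind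

theorem vblocks {S : Type*} (L : Set (Set S)) (X : Set (Multiset S)) (h : X ∈ veroBlocks 2 L) :
    ∃ (i : Option S) (B : Set S), B ∈ L ∧ X = vpt i '' B := by
  obtain ⟨r, e, B, h0, h2, hc, hB, rfl⟩ := h
  obtain rfl | rfl : r = 1 ∨ r = 2 := by omega
  · obtain ⟨a, rfl⟩ := Multiset.card_eq_one.1 (by simpa using hc)
    refine ⟨some a, B, hB, ?_⟩
    ext m
    constructor <;> rintro ⟨x, hx, rfl⟩ <;> exact ⟨x, hx, rfl⟩
  · obtain rfl := Multiset.card_eq_zero.1 (by simpa using hc)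
    refine ⟨none, B, hB, ?_⟩
    ext m
    constructor
    · rintro ⟨x, hx, rfl⟩
      exact ⟨x, hx, by rw [zero_add]; rfl⟩
    · rintro ⟨x, hx, rfl⟩
      exact ⟨x, hx, by rw [zero_add]; rfl⟩

theorem vmeet {S : Type*} (d : S) (i j : Option S) (A B : Set S) (p : Multiset S)
    (h1 : p ∈ vpt i '' A) (h2 : p ∈ vpt j '' B) :
    (i = j ∧ ∃ x, x ∈ A ∧ x ∈ B ∧ p = vpt i x) ∨
    (i ≠ j ∧ vco d i j ∈ A ∧ vco d j i ∈ B ∧ p = vpt i (vco d i j) ∧ p = vpt j (vco d j i)) := by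
  obtain ⟨x, hx, rfl⟩ := h1
  obtain ⟨y, hy, h⟩ := h2
  rcases vpt_eq d i j x y h.symm with ⟨rfl, rfl⟩ | ⟨hn, rfl, rfl⟩
  · left; exact ⟨rfl, x, hx, hy, rfl⟩
  · right; exact ⟨hn, hx, hy, rfl, h.symm⟩

theorem vfour {S : Type*} (L : Set (Set S))
    (hu : ∀ p q : S, p ≠ q → ∀ B₁ ∈ L, ∀ B₂ ∈ L,
      p ∈ B₁ → q ∈ B₁ → p ∈ B₂ → q ∈ B₂ → B₁ = B₂) (d : S) (a b c e : Option S)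
    (hab : a ≠ b) (hac : a ≠ c) (hae : a ≠ e) (hbc : b ≠ c) (hbe : b ≠ e) (hce : c ≠ e)
    (A B C E : Set S) (hA : A ∈ L) (hB : B ∈ L) (hC : C ∈ L) (hE : E ∈ L)
    (h1 : vco d a b ∈ A) (h2 : vco d a c ∈ A) (h3 : vco d a e ∈ A)
    (h4 : vco d b a ∈ B) (h5 : vco d b c ∈ B) (h6 : vco d b e ∈ B)
    (h7 : vco d c a ∈ C) (h8 : vco d c b ∈ C)
    (h9 : vco d e a ∈ E) (h10 : vco d e b ∈ E) :
    vco d c e ∈ C ∧ vco d e c ∈ E := by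
  rcases a with _ | a <;> rcases b with _ | b <;> rcases c with _ | c <;> rcases e with _ | e <;>
    simp only [vco, ne_eq, not_true_eq_false, Option.some.injEq] at * <;> grind

theorem stmt_3 {S : Type*} (ℒ : Set (Set S)) (hL : IsPLS ℒ) (hVeb : Veblenian ℒ) :
    Veblenian (veroBlocks 2 ℒ) := by
  intro p L₁ L₂ M₁ M₂ h1 h2 h3 h4 n1 n2 n3 n4 n5 n6 p1 p2 p3 p4 q11 q12 q21 q22
  obtain ⟨-, -, hu⟩ := hL
  obtain ⟨a, A, hA, rfl⟩ := vblocks _ _ h1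
  obtain ⟨b, B, hB, rfl⟩ := vblocks _ _ h2
  obtain ⟨c, C, hC, rfl⟩ := vblocks _ _ h3
  obtain ⟨e, E, hE, rfl⟩ := vblocks _ _ h4
  obtain ⟨d, -, -⟩ := id p1
  obtain ⟨u, u1, u2⟩ := q11
  obtain ⟨v, v1, v2⟩ := q12
  obtain ⟨w, w1, w2⟩ := q21
  obtain ⟨z, z1, z2⟩ := q22
  have k0 := vmeet d _ _ _ _ _ p1 p2
  have k1 := vmeet d _ _ _ _ _ u1 u2
  have k2 := vmeet d _ _ _ _ _ v1 v2
  have k3 := vmeet d _ _ _ _ _ w1 w2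
  have k4 := vmeet d _ _ _ _ _ z1 z2
  have hup : u ≠ p := by rintro rfl; exact p3 u2
  have hvp : v ≠ p := by rintro rfl; exact p4 v2
  have hwp : w ≠ p := by rintro rfl; exact p3 w2
  have hzp : z ≠ p := by rintro rfl; exact p4 z2
  by_cases huv : u = v
  · subst huv; exact ⟨u, u2, v2⟩
  by_cases hwz : w = z
  · subst hwz; exact ⟨w, w2, z2⟩
  by_cases hab : a = b
  · subst hab
    -- everything lies in one leaf, unless a triangle collapses
    have key : ∀ (c : Option S) (C : Set S), p ∉ vpt c '' C → ∀ u w : Multiset S,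
        u ∈ vpt a '' A → u ∈ vpt c '' C → w ∈ vpt a '' B → w ∈ vpt c '' C → C ∈ ℒ → c = a := by
      intro c C hp u w hu1 hu2 hw1 hw2 hC
      by_contra hca
      rcases vmeet d _ _ _ _ _ hu1 hu2 with ⟨h, -⟩ | ⟨-, i1, -, i2, -⟩
      · exact hca h.symm
      rcases vmeet d _ _ _ _ _ hw1 hw2 with ⟨h, -⟩ | ⟨-, j1, -, j2, -⟩
      · exact hca h.symm
      rcases k0 with ⟨-, x, x1, x2, rfl⟩ | ⟨h, -⟩
      · have hx : x ≠ vco d a c := by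
          rintro rfl
          rw [← i2] at hp
          exact hp hu2
        exact n1 (by rw [hu _ _ hx A hA B hB x1 i1 x2 j1])
      · exact h rfl
    obtain rfl := key c C p3 u w u1 u2 w1 w2 hC
    obtain rfl := key e E p4 v z v1 v2 z1 z2 hE
    simp only [true_and, ne_eq, not_true_eq_false, false_and, or_false] at k0 k1 k2 k3 k4
    obtain ⟨x, x1, x2, rfl⟩ := k0
    obtain ⟨s1, s2, s3, -⟩ := k1
    obtain ⟨t1, t2, t3, -⟩ := k2
    obtain ⟨r1, r2, r3, -⟩ := k3
    obtain ⟨o1, o2, o3, -⟩ := k4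
    obtain ⟨y, y1, y2⟩ := hVeb x A B C E hA hB hC hE (fun h => n1 (by rw [h]))
      (fun h => n2 (by rw [h])) (fun h => n3 (by rw [h])) (fun h => n4 (by rw [h]))
      (fun h => n5 (by rw [h])) (fun h => n6 (by rw [h])) x1 x2
      (fun h => p3 ⟨x, h, rfl⟩) (fun h => p4 ⟨x, h, rfl⟩)
      ⟨s1, s2, s3⟩ ⟨t1, t2, t3⟩ ⟨r1, r2, r3⟩ ⟨o1, o2, o3⟩
    exact ⟨_, ⟨y, y1, rfl⟩, ⟨y, y2, rfl⟩⟩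
  · obtain ⟨-, f1, f2, f3, f4⟩ := k0.resolve_left (fun h => hab h.1)
    have hac : a ≠ c := by
      rintro rfl
      obtain ⟨-, g1, g2, g3, g4⟩ := k3.resolve_left (fun h => hab h.1.symm)
      exact hwp (g4.trans f3.symm)
    have hae : a ≠ e := by
      rintro rfl
      obtain ⟨-, g1, g2, g3, g4⟩ := k4.resolve_left (fun h => hab h.1.symm)
      exact hzp (g4.trans f3.symm)
    have hbc : b ≠ c := by
      rintro rfl
      obtain ⟨-, g1, g2, g3, g4⟩ := k1.resolve_left (fun h => hab h.1)
      exact hup (g3.trans f3.symm)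
    have hbe : b ≠ e := by
      rintro rfl
      obtain ⟨-, g1, g2, g3, g4⟩ := k2.resolve_left (fun h => hab h.1)
      exact hvp (g3.trans f3.symm)
    obtain ⟨-, l1, l2, l3, -⟩ := k1.resolve_left (fun h => hac h.1)
    obtain ⟨-, m1, m2, m3, -⟩ := k2.resolve_left (fun h => hae h.1)
    obtain ⟨-, r1, r2, -, -⟩ := k3.resolve_left (fun h => hbc h.1)
    obtain ⟨-, s1, s2, -, -⟩ := k4.resolve_left (fun h => hbe h.1)
    have hce : c ≠ e := by
      rintro rfl
      exact huv (l3.trans m3.symm)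
    obtain ⟨x, y⟩ := vfour ℒ hu d a b c e hab hac hae hbc hbe hce A B C E hA hB hC hE
      f1 l1 m1 f2 r1 s1 l2 r2 m2 s2
    exact ⟨_, ⟨_, x, rfl⟩, ⟨_, y, (vpt_co d c e hce).symm⟩⟩
end

section
/- Let (S, ℒ) be a partial linear space and let p, L₁, L₂, M₁, M₂ form an incomplete Veblen configuration in V_k(S, ℒ). Assume moreover that for one of the pairs of intersection points ((L₁ ∩ M₁, L₂ ∩ M₂) or (L₁ ∩ M₂, L₂ ∩ M₁)) there are points a in the first intersection and b in the second intersection that are adjacent in V_k(S, ℒ). Then the four blocks L₁, L₂, M₁, M₂ are all contained in one leaf of V_k(S, ℒ); consequently, if (S, ℒ) is veblenian, then M₁ ∩ M₂ ≠ ∅. -/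
open Classical in
theorem aux_key1 {S : Type*} {e e' : Multiset S} {r r' : ℕ} {x y x' y' : S} (hr : 0 < r)
    (hxy : x ≠ y) (h1 : e + Multiset.replicate r x = e' + Multiset.replicate r' x')
    (h2 : e + Multiset.replicate r y = e' + Multiset.replicate r' y') :
    r = r' ∧ e = e' ∧ x = x' ∧ y = y' := by
  have c1 := fun i => congrArg (Multiset.count i) h1
  have c2 := fun i => congrArg (Multiset.count i) h2
  simp only [Multiset.count_add, Multiset.count_replicate] at c1 c2
  have hx1 := c1 x
  have hx2 := c2 x
  have hy1 := c1 y
  have hy2 := c2 y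
  have : x = x' ∧ y = y' ∧ r = r' := by grind
  obtain ⟨rfl, rfl, rfl⟩ := this
  exact ⟨rfl, by simpa using h1, rfl, rfl⟩

theorem aux_prop {S : Type*} (f : S → ℤ) (s : ℤ) (u v : S) [DecidableEq S]
    (hf : ∀ i, f i = (if v = i then s else 0) - (if u = i then s else 0)) :
    ∀ i j, i ≠ j → f i ≠ 0 → f j ≠ 0 → f i = - f j ∧ ∀ k, k ≠ i → k ≠ j → f k = 0 := by
  intro i j hij hi hj
  have h1 := hf i
  have h2 := hf j
  refine ⟨by grind, fun k hk hk' => ?_⟩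
  have h3 := hf k
  grind

theorem aux_fun {S : Type*} [DecidableEq S] (w : S → ℤ) (r : ℤ) (hr : 0 < r) (x y z : S)
    (hxy : x ≠ y) (hxz : x ≠ z) (hyz : y ≠ z) (s : S → ℤ) (u v : S → S)
    (h : ∀ q, q = x ∨ q = y ∨ q = z → ∀ i, w i = (if q = i then r else 0) +
      ((if v q = i then s q else 0) - (if u q = i then s q else 0))) :
    ∃ t, ∀ i, w i = if t = i then r else 0 := by
  have P : ∀ q, q = x ∨ q = y ∨ q = z → ∀ i j, i ≠ j →
      (w i - if q = i then r else 0) ≠ 0 → (w j - if q = j then r else 0) ≠ 0 →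
      (w i - if q = i then r else 0) = - (w j - if q = j then r else 0) ∧
      ∀ k, k ≠ i → k ≠ j → (w k - if q = k then r else 0) = 0 := by
    intro q hq
    exact aux_prop (fun i => w i - if q = i then r else 0) (s q) (u q) (v q)
      (fun i => by have := h q hq i; linarith)
  have hx := P x (by simp)
  have hy := P y (by simp)
  have hz := P z (by simp)
  -- one nonzero
  have one : ∀ a b c : S, a ≠ b → a ≠ c → b ≠ c → w a ≠ 0 → w b = 0 →
      (∀ i j, i ≠ j →
      (w i - if b = i then r else 0) ≠ 0 → (w j - if b = j then r else 0) ≠ 0 →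
      (w i - if b = i then r else 0) = - (w j - if b = j then r else 0) ∧
      ∀ k, k ≠ i → k ≠ j → (w k - if b = k then r else 0) = 0) →
      ∃ t, ∀ i, w i = if t = i then r else 0 := by
    intro a b c hab hac hbc ha hb hP
    refine ⟨a, fun i => ?_⟩
    have := hP a b hab (by grind) (by grind)
    have h2 := this.2 i
    grind
  -- two nonzero
  have two : ∀ a b c : S, a ≠ b → a ≠ c → b ≠ c → w a ≠ 0 → w b ≠ 0 →
      (∀ q, q = a ∨ q = b ∨ q = c → ∀ i j, i ≠ j →
      (w i - if q = i then r else 0) ≠ 0 → (w j - if q = j then r else 0) ≠ 0 →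
      (w i - if q = i then r else 0) = - (w j - if q = j then r else 0) ∧
      ∀ k, k ≠ i → k ≠ j → (w k - if q = k then r else 0) = 0) → False := by
    intro a b c hab hac hbc ha hb hP
    have h1 := hP c (by simp) a b hab (by grind) (by grind)
    have h2 := h1.1
    have h3 := h1.2 c hac.symm hbc.symm
    simp only [if_neg hac.symm, if_neg hbc.symm, if_true] at h2 h3
    have h4 := hP a (by simp) b c hbc (by grind) (by grind)
    have h5 := hP b (by simp) a c hac (by grind) (by grind)
    have h6 := h4.1
    have h7 := h5.1
    simp only [if_neg hac, if_neg hbc, if_neg hab, if_neg hab.symm] at h6 h7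
    omega
  by_cases ax : w x = 0
  · by_cases ay : w y = 0
    · by_cases az : w z = 0
      · have e1 := h x (by simp) x
        by_cases q : u x = x
        · refine ⟨v x, fun i => ?_⟩
          have e2 := h x (by simp) i
          clear h P hx hy hz one two
          grind
        · refine ⟨u x, fun i => ?_⟩
          have e2 := h x (by simp) i
          clear h P hx hy hz one two
          grind
      · exact one z y x hyz.symm hxz.symm hxy.symm az ay hy
    · exact one y x z hxy.symm hyz hxz ay ax hx
  · by_cases ay : w y = 0
    · exact one x y z hxy hxz hyz ax ay hy
    · exact (two x y z hxy hxz hyz ax ay P).elim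

theorem aux_key2 {S : Type*} {k : ℕ} {ℒ : Set (Set S)} {e a : Multiset S} {r : ℕ} {x y z : S}
    (hr : 0 < r) (hxy : x ≠ y) (hxz : x ≠ z) (hyz : y ≠ z)
    (hx : VerAdj k ℒ a (e + Multiset.replicate r x))
    (hy : VerAdj k ℒ a (e + Multiset.replicate r y))
    (hz : VerAdj k ℒ a (e + Multiset.replicate r z)) :
    ∃ t, a = e + Multiset.replicate r t := by
  classical
  have H : ∀ q, ∃ (s : ℤ) (u v : S), q = x ∨ q = y ∨ q = z → ∀ i,
      (a.count i : ℤ) - e.count i = (if q = i then (r : ℤ) else 0) +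
      ((if v = i then s else 0) - (if u = i then s else 0)) := by
    intro q
    by_cases hq : q = x ∨ q = y ∨ q = z
    · have : VerAdj k ℒ a (e + Multiset.replicate r q) := by
        rcases hq with rfl | rfl | rfl <;> assumption
      obtain ⟨_, ⟨s, e', B, -, -, -, -, rfl⟩, ⟨v, -, hv⟩, ⟨u, -, hu⟩⟩ := this
      refine ⟨s, u, v, fun _ i => ?_⟩
      have h1 := congrArg (Multiset.count i) hv
      have h2 := congrArg (Multiset.count i) hu
      simp only [Multiset.count_add, Multiset.count_replicate] at h1 h2
      grind
    · exact ⟨0, x, x, fun h => absurd h hq⟩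
  choose s u v H using H
  obtain ⟨t, ht⟩ := aux_fun (fun i => (a.count i : ℤ) - e.count i) r (by exact_mod_cast hr)
    x y z hxy hxz hyz s u v H
  refine ⟨t, Multiset.ext.2 fun i => ?_⟩
  have := ht i
  simp only [Multiset.count_add, Multiset.count_replicate] at this ⊢
  grind

theorem aux_sub {S : Type*} {k : ℕ} {ℒ : Set (Set S)} {e : Multiset S} {r : ℕ} (hr : 0 < r)
    {M : Set (Multiset S)} (hM : M ∈ veroBlocks k ℒ) {f g : Multiset S} (hfg : f ≠ g)
    (hf : f ∈ veroBlock e r Set.univ) (hg : g ∈ veroBlock e r Set.univ)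
    (hf' : f ∈ M) (hg' : g ∈ M) : ∃ B ∈ ℒ, M = veroBlock e r B := by
  obtain ⟨r', e', B, h0, -, -, hB, rfl⟩ := hM
  obtain ⟨x, -, rfl⟩ := hf
  obtain ⟨y, -, rfl⟩ := hg
  obtain ⟨x', -, h1⟩ := hf'
  obtain ⟨y', -, h2⟩ := hg'
  obtain ⟨rfl, rfl, -, -⟩ := aux_key1 hr (by rintro rfl; exact hfg rfl) h1 h2
  exact ⟨B, hB, rfl⟩

theorem aux_mono {S : Type*} {e : Multiset S} {r : ℕ} (B : Set S) :
    veroBlock e r B ⊆ veroBlock e r Set.univ := by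
  rintro _ ⟨x, _, rfl⟩
  exact ⟨x, trivial, rfl⟩

theorem aux_pls {S : Type*} {k : ℕ} {ℒ : Set (Set S)} (hL : IsPLS ℒ)
    {M N : Set (Multiset S)} (hM : M ∈ veroBlocks k ℒ) (hN : N ∈ veroBlocks k ℒ) (hMN : M ≠ N)
    {f g : Multiset S} (hf : f ∈ M) (hg : g ∈ M) (hf' : f ∈ N) (hg' : g ∈ N) : f = g := by
  by_contra hfg
  obtain ⟨r, e, B, h0, -, -, hB, rfl⟩ := hM
  obtain ⟨r', e', B', h0', -, -, hB', rfl⟩ := hN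
  obtain ⟨x, hx, rfl⟩ := hf
  obtain ⟨y, hy, rfl⟩ := hg
  obtain ⟨x', hx', h1⟩ := hf'
  obtain ⟨y', hy', h2⟩ := hg'
  have hxy : x ≠ y := by rintro rfl; exact hfg rfl
  obtain ⟨rfl, rfl, rfl, rfl⟩ := aux_key1 h0 hxy h1 h2
  exact hMN (by rw [hL.2.2 x y hxy B hB B' hB' hx hy hx' hy'])

/-- Main step: `b`, `d`, `p` distinct on `L₂`. -/
theorem aux_step {S : Type*} {ℒ : Set (Set S)} {k : ℕ} {p a b c d : Multiset S}
    {L₁ L₂ M₁ M₂ : Set (Multiset S)}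
    (hL₁ : L₁ ∈ veroBlocks k ℒ) (hL₂ : L₂ ∈ veroBlocks k ℒ)
    (hM₁ : M₁ ∈ veroBlocks k ℒ) (hM₂ : M₂ ∈ veroBlocks k ℒ)
    (hp₁ : p ∈ L₁) (hp₂ : p ∈ L₂) (ha : a ∈ L₁) (ha' : a ∈ M₁) (hb : b ∈ L₂) (hb' : b ∈ M₂)
    (hc : c ∈ L₁) (hc' : c ∈ M₂) (hd : d ∈ L₂) (hd' : d ∈ M₁)
    (hpa : p ≠ a) (hpb : p ≠ b) (hpd : p ≠ d) (had : a ≠ d) (hbc : b ≠ c) (hbd : b ≠ d)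
    (hab : VerAdj k ℒ a b) :
    ∃ (r : ℕ) (e : Multiset S), 0 < r ∧ r ≤ k ∧ Multiset.card e = k - r ∧
      (∃ B ∈ ℒ, L₁ = veroBlock e r B) ∧ (∃ B ∈ ℒ, L₂ = veroBlock e r B) ∧
      (∃ B ∈ ℒ, M₁ = veroBlock e r B) ∧ (∃ B ∈ ℒ, M₂ = veroBlock e r B) := by
  obtain ⟨r, e, B, h0, h1, h2, hB, rfl⟩ := id hL₂
  have T := aux_mono (e := e) (r := r) B
  have haT : a ∈ veroBlock e r Set.univ := by
    obtain ⟨x, -, rfl⟩ := hp₂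
    obtain ⟨y, -, rfl⟩ := hb
    obtain ⟨z, -, rfl⟩ := hd
    obtain ⟨t, ht⟩ := aux_key2 (k := k) (ℒ := ℒ) (a := a) (e := e) (x := x) (y := y) (z := z) h0
      (by rintro rfl; exact hpb rfl) (by rintro rfl; exact hpd rfl) (by rintro rfl; exact hbd rfl)
      ⟨L₁, hL₁, ha, hp₁⟩ hab ⟨M₁, hM₁, ha', hd'⟩
    exact ⟨t, trivial, ht⟩
  obtain ⟨B1, hB1, e1⟩ := aux_sub h0 hL₁ hpa (T hp₂) haT hp₁ ha
  have hM1 := aux_sub h0 hM₁ had haT (T hd) ha' hd'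
  have hcT : c ∈ veroBlock e r Set.univ := aux_mono B1 (e1 ▸ hc)
  exact ⟨r, e, h0, h1, h2, ⟨B1, hB1, e1⟩, ⟨B, hB, rfl⟩, hM1,
    aux_sub h0 hM₂ hbc (T hb) hcT hb' hc'⟩

theorem aux_adj_symm {S : Type*} {ℒ : Set (Set S)} {k : ℕ} {a b : Multiset S}
    (h : VerAdj k ℒ a b) : VerAdj k ℒ b a := by
  obtain ⟨B, hB, h1, h2⟩ := h
  exact ⟨B, hB, h2, h1⟩

theorem aux_all {S : Type*} {ℒ : Set (Set S)} (hL : IsPLS ℒ) {k : ℕ} {p a b c d : Multiset S}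
    {L₁ L₂ M₁ M₂ : Set (Multiset S)}
    (hL₁ : L₁ ∈ veroBlocks k ℒ) (hL₂ : L₂ ∈ veroBlocks k ℒ)
    (hM₁ : M₁ ∈ veroBlocks k ℒ) (hM₂ : M₂ ∈ veroBlocks k ℒ)
    (hd₁ : L₁ ≠ L₂) (hd₆ : M₁ ≠ M₂)
    (hp₁ : p ∈ L₁) (hp₂ : p ∈ L₂) (hp₃ : p ∉ M₁) (hp₄ : p ∉ M₂)
    (ha : a ∈ L₁) (ha' : a ∈ M₁) (hb : b ∈ L₂) (hb' : b ∈ M₂)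
    (hc : c ∈ L₁) (hc' : c ∈ M₂) (hd : d ∈ L₂) (hd' : d ∈ M₁)
    (hab : VerAdj k ℒ a b) :
    ∃ (r : ℕ) (e : Multiset S), 0 < r ∧ r ≤ k ∧ Multiset.card e = k - r ∧
      (∃ B ∈ ℒ, L₁ = veroBlock e r B) ∧ (∃ B ∈ ℒ, L₂ = veroBlock e r B) ∧
      (∃ B ∈ ℒ, M₁ = veroBlock e r B) ∧ (∃ B ∈ ℒ, M₂ = veroBlock e r B) := by
  have hpa : p ≠ a := by rintro rfl; exact hp₃ ha'
  have hpd : p ≠ d := by rintro rfl; exact hp₃ hd'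
  have hpb : p ≠ b := by rintro rfl; exact hp₄ hb'
  have hpc : p ≠ c := by rintro rfl; exact hp₄ hc'
  have key : ∀ q ∈ L₁, q ∈ L₂ → p = q := fun q h1 h2 => aux_pls hL hL₁ hL₂ hd₁ hp₁ h1 hp₂ h2
  have had : a ≠ d := by rintro rfl; exact hpa (key _ ha hd)
  have hbc : b ≠ c := by rintro rfl; exact hpb (key _ hc hb)
  have hab' : a ≠ b := by rintro rfl; exact hpa (key _ ha hb)
  by_cases hbd : b = d
  · have hac : a ≠ c := by
      rintro rfl
      subst hbd
      exact hab' (aux_pls hL hM₁ hM₂ hd₆ ha' hd' hc' hb')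
    obtain ⟨r, e, h0, h1, h2, h3, h4, h5, h6⟩ := aux_step hL₂ hL₁ hM₂ hM₁ hp₂ hp₁ hb hb' ha ha' hd hd' hc hc'
      hpb hpa hpc hbc had hac (aux_adj_symm hab)
    exact ⟨r, e, h0, h1, h2, h4, h3, h6, h5⟩
  · exact aux_step hL₁ hL₂ hM₁ hM₂ hp₁ hp₂ ha ha' hb hb' hc hc' hd hd' hpa hpb hpd had hbc hbd hab

theorem aux_inter {S : Type*} {e : Multiset S} {r : ℕ} (h0 : 0 < r) {A B : Set S} :
    (veroBlock e r A ∩ veroBlock e r B).Nonempty ↔ (A ∩ B).Nonempty := by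
  constructor
  · rintro ⟨_, ⟨x, hx, rfl⟩, ⟨y, hy, h⟩⟩
    have : x = y := Multiset.replicate_right_injective h0.ne' (by simpa using h)
    exact ⟨x, hx, this ▸ hy⟩
  · rintro ⟨x, hx, hy⟩
    exact ⟨_, ⟨x, hx, rfl⟩, ⟨x, hy, rfl⟩⟩

theorem stmt_4 {S : Type*} (ℒ : Set (Set S)) (hL : IsPLS ℒ) (k : ℕ)
    (p : Multiset S) (L₁ L₂ M₁ M₂ : Set (Multiset S))
    (hL₁ : L₁ ∈ veroBlocks k ℒ) (hL₂ : L₂ ∈ veroBlocks k ℒ)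
    (hM₁ : M₁ ∈ veroBlocks k ℒ) (hM₂ : M₂ ∈ veroBlocks k ℒ)
    (hd₁ : L₁ ≠ L₂) (hd₂ : L₁ ≠ M₁) (hd₃ : L₁ ≠ M₂) (hd₄ : L₂ ≠ M₁) (hd₅ : L₂ ≠ M₂)
    (hd₆ : M₁ ≠ M₂)
    (hp₁ : p ∈ L₁) (hp₂ : p ∈ L₂) (hp₃ : p ∉ M₁) (hp₄ : p ∉ M₂)
    (hi₁ : (L₁ ∩ M₁).Nonempty) (hi₂ : (L₁ ∩ M₂).Nonempty)
    (hi₃ : (L₂ ∩ M₁).Nonempty) (hi₄ : (L₂ ∩ M₂).Nonempty)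
    (hadj : (∃ a ∈ L₁ ∩ M₁, ∃ b ∈ L₂ ∩ M₂, VerAdj k ℒ a b) ∨
            (∃ a ∈ L₁ ∩ M₂, ∃ b ∈ L₂ ∩ M₁, VerAdj k ℒ a b)) :
    (∃ T ∈ veroLeaves S k, L₁ ⊆ T ∧ L₂ ⊆ T ∧ M₁ ⊆ T ∧ M₂ ⊆ T) ∧
      (Veblenian ℒ → (M₁ ∩ M₂).Nonempty) := by
  have main : ∃ (r : ℕ) (e : Multiset S), 0 < r ∧ r ≤ k ∧ Multiset.card e = k - r ∧
      (∃ B ∈ ℒ, L₁ = veroBlock e r B) ∧ (∃ B ∈ ℒ, L₂ = veroBlock e r B) ∧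
      (∃ B ∈ ℒ, M₁ = veroBlock e r B) ∧ (∃ B ∈ ℒ, M₂ = veroBlock e r B) := by
    rcases hadj with ⟨a, ⟨ha, ha'⟩, b, ⟨hb, hb'⟩, hab⟩ | ⟨c, ⟨hc, hc'⟩, d, ⟨hd, hd'⟩, hcd⟩
    · obtain ⟨c, hc, hc'⟩ := hi₂
      obtain ⟨d, hd, hd'⟩ := hi₃
      exact aux_all hL hL₁ hL₂ hM₁ hM₂ hd₁ hd₆ hp₁ hp₂ hp₃ hp₄ ha ha' hb hb' hc hc' hd hd' hab
    · obtain ⟨a, ha, ha'⟩ := hi₁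
      obtain ⟨b, hb, hb'⟩ := hi₄
      obtain ⟨r, e, h0, h1, h2, h3, h4, h5, h6⟩ := aux_all hL hL₁ hL₂ hM₂ hM₁ hd₁ hd₆.symm
        hp₁ hp₂ hp₄ hp₃ hc hc' hd hd' ha ha' hb hb' hcd
      exact ⟨r, e, h0, h1, h2, h3, h4, h6, h5⟩
  obtain ⟨r, e, h0, h1, h2, ⟨A₁, hA₁, rfl⟩, ⟨A₂, hA₂, rfl⟩, ⟨B₁, hB₁, rfl⟩, ⟨B₂, hB₂, rfl⟩⟩ := main
  refine ⟨⟨_, ⟨r, e, h0, h1, h2, rfl⟩, aux_mono _, aux_mono _, aux_mono _, aux_mono _⟩, fun hV => ?_⟩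
  rw [aux_inter h0] at *
  obtain ⟨x, hx, rfl⟩ := hp₁
  obtain ⟨y, hy, h⟩ := hp₂
  have hxy : x = y := Multiset.replicate_right_injective h0.ne' (by simpa using h)
  subst hxy
  exact hV x A₁ A₂ B₁ B₂ hA₁ hA₂ hB₁ hB₂ (fun h => hd₁ (by rw [h])) (fun h => hd₂ (by rw [h]))
    (fun h => hd₃ (by rw [h])) (fun h => hd₄ (by rw [h])) (fun h => hd₅ (by rw [h]))
    (fun h => hd₆ (by rw [h])) hx hy (fun h => hp₃ ⟨x, h, rfl⟩) (fun h => hp₄ ⟨x, h, rfl⟩)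
    hi₁ hi₂ hi₃ hi₄
end

section
/- Let (S, ℒ) be a linear space (a partial linear space in which any two distinct points lie on a common line), and let L₁, K₁, L₂, K₂ be blocks of V_2(S, ℒ) lying in four pairwise distinct leaves which form a quadrangle without diagonals: there are four pairwise distinct points p₁ ∈ L₁ ∩ K₁, p₂ ∈ K₁ ∩ L₂, p₃ ∈ L₂ ∩ K₂, p₄ ∈ K₂ ∩ L₁ such that p₁ is not adjacent to p₃ and p₂ is not adjacent to p₄. Then, after possibly exchanging the pair (L₁, L₂) with the pair (K₁, K₂) and/or the two blocks within each of these pairs, one of the following holds: (1) there are lines m, n ∈ ℒ and points a₁ ≠ b₁ on n and a₂ ≠ b₂ on m with L₁ = a₁ + m, L₂ = b₁ + m, K₁ = a₂ + n, K₂ = b₂ + n, and the vertices of the quadrangle are a₁+a₂, a₁+b₂, a₂+b₁, b₁+b₂; (2) there are lines m, n, l ∈ ℒ and pairwise distinct points a, b, c with a, b ∈ n, a, c ∈ m, b, c ∈ l, such that K₁ = 2n, K₂ = c + n, L₁ = a + m, L₂ = b + l, and the vertices are 2a, a+c, 2b, b+c. -/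
def QuadCase {S : Type*} (ℒ : Set (Set S)) (A₁ A₂ C₁ C₂ : Set (Multiset S))
    (Vtx : Set (Multiset S)) : Prop :=
  (∃ m ∈ ℒ, ∃ n ∈ ℒ, ∃ a₁ b₁ a₂ b₂ : S,
      a₁ ∈ n ∧ b₁ ∈ n ∧ a₁ ≠ b₁ ∧ a₂ ∈ m ∧ b₂ ∈ m ∧ a₂ ≠ b₂ ∧
      A₁ = addPt a₁ m ∧ A₂ = addPt b₁ m ∧ C₁ = addPt a₂ n ∧ C₂ = addPt b₂ n ∧
      Vtx = {({a₁, a₂} : Multiset S), ({a₁, b₂} : Multiset S),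
             ({a₂, b₁} : Multiset S), ({b₁, b₂} : Multiset S)}) ∨
  (∃ m ∈ ℒ, ∃ n ∈ ℒ, ∃ l ∈ ℒ, ∃ a b c : S,
      a ≠ b ∧ a ≠ c ∧ b ≠ c ∧ a ∈ n ∧ b ∈ n ∧ a ∈ m ∧ c ∈ m ∧ b ∈ l ∧ c ∈ l ∧
      C₁ = dbl n ∧ C₂ = addPt c n ∧ A₁ = addPt a m ∧ A₂ = addPt b l ∧
      Vtx = {({a, a} : Multiset S), ({a, c} : Multiset S),
             ({b, b} : Multiset S), ({b, c} : Multiset S)})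

theorem hp_eq {S : Type*} {a b x y : S} (h : ({a, x} : Multiset S) = {b, y}) (hab : a ≠ b) :
    x = b ∧ y = a := by
  have h1 : b ∈ ({a, x} : Multiset S) := by rw [h]; simp
  have h2 : a ∈ ({b, y} : Multiset S) := by rw [← h]; simp
  simp only [Multiset.insert_eq_cons, Multiset.mem_cons, Multiset.mem_singleton] at h1 h2
  refine ⟨?_, ?_⟩
  · rcases h1 with h1 | h1
    · exact absurd h1.symm hab
    · exact h1.symm
  · rcases h2 with h2 | h2
    · exact absurd h2 hab
    · exact h2.symm

theorem hp_dbl {S : Type*} {a x y : S} (h : ({a, x} : Multiset S) = {y, y}) :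
    x = a ∧ y = a := by
  have h1 : a ∈ ({y, y} : Multiset S) := by rw [← h]; simp
  have h2 : x ∈ ({y, y} : Multiset S) := by rw [← h]; simp
  simp at h1 h2
  exact ⟨by rw [h1, h2], h1.symm⟩

def BlkAdd {S : Type*} (ℒ : Set (Set S)) (B T : Set (Multiset S)) : Prop :=
  ∃ a, T = addPt a Set.univ ∧ ∃ m ∈ ℒ, B = addPt a m

def BlkDbl {S : Type*} (ℒ : Set (Set S)) (B T : Set (Multiset S)) : Prop :=
  T = dbl Set.univ ∧ ∃ m ∈ ℒ, B = dbl m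

theorem vb_cases {S : Type*} (r : ℕ) (e : Multiset S) (h0 : 0 < r) (h2 : r ≤ 2)
    (he : Multiset.card e = 2 - r) :
    (∃ a, ∀ B, veroBlock e r B = addPt a B) ∨ (∀ B, veroBlock e r B = dbl B) := by
  have : r = 1 ∨ r = 2 := by omega
  rcases this with rfl | rfl
  · obtain ⟨a, rfl⟩ := Multiset.card_eq_one.1 he
    exact Or.inl ⟨a, fun B => rfl⟩
  · obtain rfl := Multiset.card_eq_zero.1 he
    right
    intro B
    ext t
    simp only [veroBlock, dbl, Set.mem_setOf_eq, zero_add]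
    rfl

theorem blk_cases {S : Type*} (ℒ : Set (Set S)) (hL : IsLinearSpace ℒ) {B T : Set (Multiset S)}
    (hB : B ∈ veroBlocks 2 ℒ) (hT : T ∈ veroLeaves S 2) (hs : B ⊆ T) :
    BlkAdd ℒ B T ∨ BlkDbl ℒ B T := by
  obtain ⟨r, e, m, h0, h2, he, hm, rfl⟩ := hB
  obtain ⟨r', e', h0', h2', he', rfl⟩ := hT
  obtain ⟨u, v, w, hu, hv, hw, huv, huw, hvw⟩ := hL.1.2.1 m hm
  rcases vb_cases r e h0 h2 he with ⟨a, h⟩ | h <;>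
    rcases vb_cases r' e' h0' h2' he' with ⟨b, h'⟩ | h' <;> rw [h, h'] at *
  · left
    by_cases hab : a = b
    · subst hab
      exact ⟨a, rfl, m, hm, rfl⟩
    · obtain ⟨x, -, hx⟩ := hs ⟨u, hu, rfl⟩
      obtain ⟨y, -, hy⟩ := hs ⟨v, hv, rfl⟩
      exact absurd ((hp_eq hx hab).1.trans (hp_eq hy hab).1.symm) huv
  · obtain ⟨x, -, hx⟩ := hs ⟨u, hu, rfl⟩
    obtain ⟨y, -, hy⟩ := hs ⟨v, hv, rfl⟩
    exact absurd ((hp_dbl hx).1.trans (hp_dbl hy).1.symm) huv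
  · obtain ⟨x, -, hx⟩ := hs ⟨u, hu, rfl⟩
    obtain ⟨y, -, hy⟩ := hs ⟨v, hv, rfl⟩
    exact absurd ((hp_dbl hx.symm).2.trans (hp_dbl hy.symm).2.symm) huv
  · exact Or.inr ⟨rfl, m, hm, rfl⟩

theorem meet_add {S : Type*} {a b : S} {m n : Set S} {p : Multiset S} (hab : a ≠ b)
    (h : p ∈ addPt a m) (h' : p ∈ addPt b n) : b ∈ m ∧ a ∈ n ∧ p = {a, b} := by
  obtain ⟨x, hx, rfl⟩ := h
  obtain ⟨y, hy, h⟩ := h'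
  obtain ⟨rfl, rfl⟩ := hp_eq h hab
  exact ⟨hx, hy, rfl⟩

theorem meet_dbl {S : Type*} {a : S} {m n : Set S} {p : Multiset S}
    (h : p ∈ addPt a m) (h' : p ∈ dbl n) : a ∈ m ∧ a ∈ n ∧ p = {a, a} := by
  obtain ⟨x, hx, rfl⟩ := h
  obtain ⟨y, hy, h⟩ := h'
  obtain ⟨rfl, rfl⟩ := hp_dbl h
  exact ⟨hx, hy, rfl⟩

theorem core_add {S : Type*} (ℒ : Set (Set S)) (hL : IsLinearSpace ℒ)
    {L₁ K₁ L₂ K₂ T₁ T₂ T₃ T₄ : Set (Multiset S)} {p₁ p₂ p₃ p₄ : Multiset S}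
    (hTd : T₁ ≠ T₂ ∧ T₁ ≠ T₃ ∧ T₁ ≠ T₄ ∧ T₂ ≠ T₃ ∧ T₂ ≠ T₄ ∧ T₃ ≠ T₄)
    (hp₁ : p₁ ∈ L₁ ∩ K₁) (hp₂ : p₂ ∈ K₁ ∩ L₂) (hp₃ : p₃ ∈ L₂ ∩ K₂) (hp₄ : p₄ ∈ K₂ ∩ L₁)
    (h₁ : BlkAdd ℒ L₁ T₁) (h₂ : BlkAdd ℒ K₁ T₂) (h₃ : BlkAdd ℒ L₂ T₃) (h₄ : BlkAdd ℒ K₂ T₄) :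
    QuadCase ℒ L₁ L₂ K₁ K₂ {p₁, p₂, p₃, p₄} := by
  obtain ⟨a, rfl, m, hm, rfl⟩ := h₁
  obtain ⟨b, rfl, n, hn, rfl⟩ := h₂
  obtain ⟨c, rfl, l, hl, rfl⟩ := h₃
  obtain ⟨d, rfl, k, hk, rfl⟩ := h₄
  obtain ⟨h12, h13, h14, h23, h24, h34⟩ := hTd
  have e : ∀ {x y : S}, addPt x Set.univ ≠ addPt y Set.univ → x ≠ y := by
    rintro x y h rfl; exact h rfl
  obtain ⟨bm, an, rfl⟩ := meet_add (e h12) hp₁.1 hp₁.2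
  obtain ⟨cn, bl, rfl⟩ := meet_add (e h23) hp₂.1 hp₂.2
  obtain ⟨dl, ck, rfl⟩ := meet_add (e h34) hp₃.1 hp₃.2
  obtain ⟨ak, dm, rfl⟩ := meet_add (e h14).symm hp₄.1 hp₄.2
  obtain rfl := hL.1.2.2 b d (e h24) m hm l hl bm dm bl dl
  obtain rfl := hL.1.2.2 a c (e h13) n hn k hk an cn ak ck
  refine Or.inl ⟨m, hm, n, hn, a, c, b, d, an, cn, e h13, bm, dm, e h24, rfl, rfl, rfl, rfl, ?_⟩
  rw [Multiset.pair_comm d a]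
  ext t
  simp only [Set.mem_insert_iff, Set.mem_singleton_iff]
  tauto

theorem core_dbl {S : Type*} (ℒ : Set (Set S)) (hL : IsLinearSpace ℒ)
    {L₁ K₁ L₂ K₂ T₁ T₂ T₃ T₄ V : Set (Multiset S)} {p₁ p₂ p₃ p₄ : Multiset S}
    (h13 : T₁ ≠ T₃) (h14 : T₁ ≠ T₄) (h34 : T₃ ≠ T₄)
    (hp₁ : p₁ ∈ L₁ ∧ p₁ ∈ K₁) (hp₂ : p₂ ∈ K₁ ∧ p₂ ∈ L₂) (hp₃ : p₃ ∈ L₂ ∧ p₃ ∈ K₂)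
    (hp₄ : p₄ ∈ K₂ ∧ p₄ ∈ L₁)
    (h₁ : BlkAdd ℒ L₁ T₁) (h₂ : BlkDbl ℒ K₁ T₂) (h₃ : BlkAdd ℒ L₂ T₃) (h₄ : BlkAdd ℒ K₂ T₄)
    (hV : ∀ t, t ∈ V ↔ t = p₁ ∨ t = p₂ ∨ t = p₃ ∨ t = p₄) :
    QuadCase ℒ L₁ L₂ K₁ K₂ V := by
  obtain ⟨a, rfl, m, hm, rfl⟩ := h₁
  obtain ⟨rfl, n, hn, rfl⟩ := h₂
  obtain ⟨b, rfl, l, hl, rfl⟩ := h₃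
  obtain ⟨c, rfl, k, hk, rfl⟩ := h₄
  have e : ∀ {x y : S}, addPt x Set.univ ≠ addPt y Set.univ → x ≠ y := by
    rintro x y h rfl; exact h rfl
  obtain ⟨am, an, rfl⟩ := meet_dbl hp₁.1 hp₁.2
  obtain ⟨bl, bn, rfl⟩ := meet_dbl hp₂.2 hp₂.1
  obtain ⟨cl, bk, rfl⟩ := meet_add (e h34) hp₃.1 hp₃.2
  obtain ⟨cm, ak, rfl⟩ := meet_add (e h14) hp₄.2 hp₄.1
  obtain rfl := hL.1.2.2 a b (e h13) n hn k hk an bn ak bk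
  refine Or.inr ⟨m, hm, n, hn, l, hl, a, b, c, e h13, e h14, e h34, an, bn, am, cm, bl, cl,
    rfl, rfl, rfl, rfl, ?_⟩
  ext t
  rw [hV]
  simp only [Set.mem_insert_iff, Set.mem_singleton_iff]
  tauto

theorem stmt_5 {S : Type*} (ℒ : Set (Set S)) (hL : IsLinearSpace ℒ)
    (L₁ K₁ L₂ K₂ : Set (Multiset S))
    (hL₁ : L₁ ∈ veroBlocks 2 ℒ) (hK₁ : K₁ ∈ veroBlocks 2 ℒ)
    (hL₂ : L₂ ∈ veroBlocks 2 ℒ) (hK₂ : K₂ ∈ veroBlocks 2 ℒ)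
    (T₁ T₂ T₃ T₄ : Set (Multiset S))
    (hT₁ : T₁ ∈ veroLeaves S 2) (hT₂ : T₂ ∈ veroLeaves S 2)
    (hT₃ : T₃ ∈ veroLeaves S 2) (hT₄ : T₄ ∈ veroLeaves S 2)
    (hsub₁ : L₁ ⊆ T₁) (hsub₂ : K₁ ⊆ T₂) (hsub₃ : L₂ ⊆ T₃) (hsub₄ : K₂ ⊆ T₄)
    (hTd : T₁ ≠ T₂ ∧ T₁ ≠ T₃ ∧ T₁ ≠ T₄ ∧ T₂ ≠ T₃ ∧ T₂ ≠ T₄ ∧ T₃ ≠ T₄)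
    (p₁ p₂ p₃ p₄ : Multiset S)
    (hpd : p₁ ≠ p₂ ∧ p₁ ≠ p₃ ∧ p₁ ≠ p₄ ∧ p₂ ≠ p₃ ∧ p₂ ≠ p₄ ∧ p₃ ≠ p₄)
    (hp₁ : p₁ ∈ L₁ ∩ K₁) (hp₂ : p₂ ∈ K₁ ∩ L₂) (hp₃ : p₃ ∈ L₂ ∩ K₂) (hp₄ : p₄ ∈ K₂ ∩ L₁)
    (hna₁ : ¬ VerAdj 2 ℒ p₁ p₃) (hna₂ : ¬ VerAdj 2 ℒ p₂ p₄) :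
    QuadCase ℒ L₁ L₂ K₁ K₂ {p₁, p₂, p₃, p₄} ∨ QuadCase ℒ L₁ L₂ K₂ K₁ {p₁, p₂, p₃, p₄} ∨
    QuadCase ℒ L₂ L₁ K₁ K₂ {p₁, p₂, p₃, p₄} ∨ QuadCase ℒ L₂ L₁ K₂ K₁ {p₁, p₂, p₃, p₄} ∨
    QuadCase ℒ K₁ K₂ L₁ L₂ {p₁, p₂, p₃, p₄} ∨ QuadCase ℒ K₁ K₂ L₂ L₁ {p₁, p₂, p₃, p₄} ∨
    QuadCase ℒ K₂ K₁ L₁ L₂ {p₁, p₂, p₃, p₄} ∨ QuadCase ℒ K₂ K₁ L₂ L₁ {p₁, p₂, p₃, p₄} := by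
  obtain ⟨h12, h13, h14, h23, h24, h34⟩ := id hTd
  rcases blk_cases ℒ hL hL₁ hT₁ hsub₁ with b₁ | b₁
  · rcases blk_cases ℒ hL hK₁ hT₂ hsub₂ with b₂ | b₂
    · rcases blk_cases ℒ hL hL₂ hT₃ hsub₃ with b₃ | b₃
      · rcases blk_cases ℒ hL hK₂ hT₄ hsub₄ with b₄ | b₄
        · exact Or.inl (core_add ℒ hL hTd hp₁ hp₂ hp₃ hp₄ b₁ b₂ b₃ b₄)
        · have := core_dbl ℒ hL (V := {p₁, p₂, p₃, p₄}) h13.symm h23.symm h12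
            hp₃ hp₄ hp₁ hp₂ b₃ b₄ b₁ b₂ (by
              intro t; simp only [Set.mem_insert_iff, Set.mem_singleton_iff]; tauto)
          tauto
      · have b₄ := (blk_cases ℒ hL hK₂ hT₄ hsub₄).resolve_right
          (fun h => h34 (b₃.1.trans h.1.symm))
        have := core_dbl ℒ hL (V := {p₁, p₂, p₃, p₄}) h24 h12.symm h14.symm
            hp₂ hp₃ hp₄ hp₁ b₂ b₃ b₄ b₁ (by
              intro t; simp only [Set.mem_insert_iff, Set.mem_singleton_iff]; tauto)
        tauto
    · have b₃ := (blk_cases ℒ hL hL₂ hT₃ hsub₃).resolve_right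
          (fun h => h23 (b₂.1.trans h.1.symm))
      have b₄ := (blk_cases ℒ hL hK₂ hT₄ hsub₄).resolve_right
          (fun h => h24 (b₂.1.trans h.1.symm))
      have := core_dbl ℒ hL (V := {p₁, p₂, p₃, p₄}) h13 h14 h34
            hp₁ hp₂ hp₃ hp₄ b₁ b₂ b₃ b₄ (by
              intro t; simp only [Set.mem_insert_iff, Set.mem_singleton_iff])
      tauto
  · have b₂ := (blk_cases ℒ hL hK₁ hT₂ hsub₂).resolve_right
          (fun h => h12 (b₁.1.trans h.1.symm))
    have b₃ := (blk_cases ℒ hL hL₂ hT₃ hsub₃).resolve_right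
          (fun h => h13 (b₁.1.trans h.1.symm))
    have b₄ := (blk_cases ℒ hL hK₂ hT₄ hsub₄).resolve_right
          (fun h => h14 (b₁.1.trans h.1.symm))
    have := core_dbl ℒ hL (V := {p₁, p₂, p₃, p₄}) h24.symm h34.symm h23
            hp₄ hp₁ hp₂ hp₃ b₄ b₁ b₂ b₃ (by
              intro t; simp only [Set.mem_insert_iff, Set.mem_singleton_iff]; tauto)
    tauto
end

section
/- Let (S, ℒ) be a partial linear space, let k ≥ 2, and let h₀ be a hyperplane of (S, ℒ). Then the set 𝔶_k(h₀) of all size-k multisets with all elements in h₀ is a subspace of V_k(S, ℒ), but it is not l-transversal in V_k(S, ℒ): some block of V_k(S, ℒ) is disjoint from 𝔶_k(h₀). -/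
theorem stmt_8 {S : Type*} (ℒ : Set (Set S)) (hL : IsPLS ℒ)
    (h₀ : Set S) (hh₀ : IsHyperplane ℒ h₀) (k : ℕ) (hk : 2 ≤ k) :
    IsSubspace (veroBlocks k ℒ)
      { m : Multiset S | Multiset.card m = k ∧ ∀ x ∈ m, x ∈ h₀ } ∧
    ∃ B ∈ veroBlocks k ℒ,
      B ∩ { m : Multiset S | Multiset.card m = k ∧ ∀ x ∈ m, x ∈ h₀ } = ∅ := by
  obtain ⟨hsub, -, hne⟩ := hh₀
  constructor
  · rintro _ ⟨r, e, B, hr, hrk, he, hB, rfl⟩ ⟨p, ⟨⟨x, hx, rfl⟩, -, hp⟩, q, ⟨⟨y, hy, rfl⟩, -, hq⟩, hpq⟩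
    have hx0 : x ∈ h₀ := hp x (by simp [Multiset.mem_replicate, hr.ne'])
    have hy0 : y ∈ h₀ := hq y (by simp [Multiset.mem_replicate, hr.ne'])
    have hxy : x ≠ y := by
      rintro rfl
      exact hpq rfl
    have hBs : B ⊆ h₀ := hsub B hB ⟨x, ⟨hx, hx0⟩, y, ⟨hy, hy0⟩, hxy⟩
    rintro _ ⟨z, hz, rfl⟩
    refine ⟨by simp [he]; omega, fun w hw => ?_⟩
    rcases Multiset.mem_add.1 hw with hw | hw
    · exact hp w (Multiset.mem_add.2 (Or.inl hw))
    · rw [Multiset.eq_of_mem_replicate hw]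
      exact hBs hz
  · obtain ⟨a, ha⟩ := (Set.ne_univ_iff_exists_notMem h₀).1 hne
    obtain ⟨B, hB⟩ := hL.1
    refine ⟨veroBlock (Multiset.replicate (k - 1) a) 1 B,
      ⟨1, _, B, one_pos, by omega, by simp, hB, rfl⟩, ?_⟩
    rw [Set.eq_empty_iff_forall_notMem]
    rintro _ ⟨⟨x, hx, rfl⟩, -, h⟩
    refine ha (h a (Multiset.mem_add.2 (Or.inl ?_)))
    exact Multiset.mem_replicate.2 ⟨by omega, rfl⟩
end

section
/- Let K be a field with char K ≠ 2, V a K-vector space, and ξ a nonzero reflexive bilinear form on V (ξ(u,v) = 0 iff ξ(v,u) = 0). Let h₀ be a hyperplane of the projective space ℙ(V), and assume h₀ is not contained in the set of self-conjugate points {⟨u⟩ : ξ(u,u) = 0}. Then the set H = {2x : x ∈ h₀} ∪ {⟨u⟩ + ⟨v⟩ : u, v ∈ V∖{0}, ξ(u,v) = 0} is NOT a subspace of the Veronese space V₂(ℙ(V)). -/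
def projLines (K V : Type*) [Field K] [AddCommGroup V] [Module K V] :
    Set (Set (Projectivization K V)) :=
  { L | ∃ W : Submodule K V, Module.finrank K ↥W = 2 ∧
      L = { p : Projectivization K V | p.submodule ≤ W } }

def Hxi {K V : Type*} [Field K] [AddCommGroup V] [Module K V]
    (ξ : V →ₗ[K] V →ₗ[K] K) : Set (Multiset (Projectivization K V)) :=
  { m | ∃ (u v : V) (hu : u ≠ 0) (hv : v ≠ 0), ξ u v = 0 ∧
      m = ({Projectivization.mk K u hu, Projectivization.mk K v hv} :
        Multiset (Projectivization K V)) }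

theorem Hxi_pair {K V : Type*} [Field K] [AddCommGroup V] [Module K V]
    (ξ : V →ₗ[K] V →ₗ[K] K)
    (hrefl : ∀ u v : V, ξ u v = 0 → ξ v u = 0) (u v : V) (hu : u ≠ 0) (hv : v ≠ 0)
    (h : ({Projectivization.mk K u hu, Projectivization.mk K v hv} :
        Multiset (Projectivization K V)) ∈ Hxi ξ) : ξ u v = 0 := by
  have key : ∀ (a b c d : V) (ha : a ≠ 0) (hb : b ≠ 0) (hc : c ≠ 0) (hd : d ≠ 0),
      ξ a b = 0 → Projectivization.mk K c hc = Projectivization.mk K a ha →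
      Projectivization.mk K d hd = Projectivization.mk K b hb → ξ c d = 0 := by
    intro a b c d ha hb hc hd hab h1 h2
    rw [Projectivization.mk_eq_mk_iff'] at h1 h2
    obtain ⟨s, rfl⟩ := h1
    obtain ⟨t, rfl⟩ := h2
    simp [hab]
  obtain ⟨a, b, ha, hb, hab, hm⟩ := h
  rw [Multiset.insert_eq_cons, Multiset.insert_eq_cons, Multiset.cons_eq_cons] at hm
  rcases hm with ⟨h1, h2⟩ | ⟨-, cs, h1, h2⟩
  · exact key a b u v ha hb hu hv hab h1 (by simpa using h2)
  · rw [Multiset.singleton_eq_cons_iff] at h1 h2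
    exact key b a u v hb ha hu hv (hrefl _ _ hab) h2.1.symm h1.1

theorem stmt_10 {K V : Type*} [Field K] [AddCommGroup V] [Module K V]
    (hchar : (2 : K) ≠ 0)
    (ξ : V →ₗ[K] V →ₗ[K] K) (hξ : ξ ≠ 0)
    (hrefl : ∀ u v : V, ξ u v = 0 → ξ v u = 0)
    (h₀ : Set (Projectivization K V)) (hh₀ : IsHyperplane (projLines K V) h₀)
    (hns : ¬ h₀ ⊆ { p : Projectivization K V |
      ∃ (u : V) (hu : u ≠ 0), p = Projectivization.mk K u hu ∧ ξ u u = 0 }) :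
    ¬ IsSubspace (veroBlocks 2 (projLines K V))
      ({ m : Multiset (Projectivization K V) |
          ∃ p ∈ h₀, m = ({p, p} : Multiset (Projectivization K V)) } ∪ Hxi ξ) := by
  intro hsub
  apply hns
  intro p hp
  induction p using Projectivization.ind with
  | h u hu =>
  refine ⟨u, hu, rfl, ?_⟩
  by_contra huu
  obtain ⟨-, -, hne⟩ := hh₀
  obtain ⟨q, hq⟩ := (Set.ne_univ_iff_exists_notMem _).1 hne
  induction q using Projectivization.ind with
  | h w hw =>
  have hnot : ∀ c : K, w ≠ c • u := by
    intro c hc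
    apply hq
    have : Projectivization.mk K w hw = Projectivization.mk K u hu :=
      (Projectivization.mk_eq_mk_iff' ..).2 ⟨c, hc.symm⟩
    rwa [this]
  obtain ⟨z, hz⟩ : ∃ z, z = w - (ξ u w / ξ u u) • u := ⟨_, rfl⟩
  have hznot : ∀ c : K, c • u ≠ z := by
    intro c hc
    apply hnot (c + ξ u w / ξ u u)
    rw [add_smul, hc, hz]; abel
  have huz : ξ u z = 0 := by
    rw [hz]; simp [huu]
  have hz0 : z ≠ 0 := fun h => hznot 0 (by simp [h])
  have hx0 : z + u ≠ 0 := fun h => hznot (-1) (by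
    rw [neg_one_smul]; exact (eq_neg_of_add_eq_zero_left h).symm)
  have hli : LinearIndependent K ![u, z] := by
    rw [LinearIndependent.pair_iff' hu]
    exact hznot
  have hmem : ∀ v (hv : v ≠ 0), v ∈ Submodule.span K (Set.range ![u, z]) →
      ({Projectivization.mk K u hu, Projectivization.mk K v hv} :
        Multiset (Projectivization K V)) ∈ veroBlock {Projectivization.mk K u hu} 1
        { p : Projectivization K V | p.submodule ≤ Submodule.span K (Set.range ![u, z]) } := by
    intro v hv hvm
    refine ⟨Projectivization.mk K v hv, ?_, by simp [Multiset.insert_eq_cons]⟩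
    simpa [Projectivization.submodule_mk] using hvm
  have hum : u ∈ Submodule.span K (Set.range ![u, z]) := Submodule.subset_span ⟨0, rfl⟩
  have hzm : z ∈ Submodule.span K (Set.range ![u, z]) := Submodule.subset_span ⟨1, rfl⟩
  have hB := hsub _ ⟨1, {Projectivization.mk K u hu}, _, by norm_num, by norm_num, by simp,
    ⟨Submodule.span K (Set.range ![u, z]), by
      rw [finrank_span_eq_card hli]; simp, rfl⟩, rfl⟩
    ⟨_, ⟨hmem u hu hum, Or.inl ⟨_, hp, rfl⟩⟩,
     _, ⟨hmem z hz0 hzm, Or.inr ⟨u, z, hu, hz0, huz, rfl⟩⟩, by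
      intro h
      simp only [Multiset.insert_eq_cons, Multiset.cons_inj_right, Multiset.singleton_inj] at h
      obtain ⟨c, hc⟩ := (Projectivization.mk_eq_mk_iff' ..).1 h.symm
      exact hznot c hc⟩
  rcases hB (hmem (z + u) hx0 (Submodule.add_mem _ hzm hum)) with ⟨p, -, hpp⟩ | h
  · have h1 : Projectivization.mk K u hu ∈ ({p, p} : Multiset (Projectivization K V)) := by
      rw [← hpp]; simp
    have h2 : Projectivization.mk K (z + u) hx0 ∈ ({p, p} : Multiset (Projectivization K V)) := by
      rw [← hpp]; simp
    simp only [Multiset.insert_eq_cons, Multiset.mem_cons, Multiset.mem_singleton, or_self] at h1 h2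
    obtain ⟨c, hc⟩ := (Projectivization.mk_eq_mk_iff' ..).1 (h2.trans h1.symm)
    apply hznot (c - 1)
    rw [sub_smul, hc, one_smul]; abel
  · have := Hxi_pair ξ hrefl _ _ _ _ h
    rw [map_add, huz, zero_add] at this
    exact huu this
end

section
/- Let K be a field with char K ≠ 2, V a K-vector space, and ξ a nonzero alternating bilinear form on V (ξ(u,u) = 0 for all u). Then the set H_ξ = { ⟨u⟩ + ⟨v⟩ : u, v ∈ V∖{0}, ξ(u,v) = 0 } is a proper subspace of the Veronese space V₂(ℙ(V)) which meets every block; that is, H_ξ is a hyperplane of V₂(ℙ(V)). -/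
theorem hxi_mk_iff {K V : Type*} [Field K] [AddCommGroup V] [Module K V]
    (ξ : V →ₗ[K] V →ₗ[K] K) (halt : ∀ u : V, ξ u u = 0) (u v : V) (hu : u ≠ 0) (hv : v ≠ 0) :
    ({Projectivization.mk K u hu, Projectivization.mk K v hv} :
        Multiset (Projectivization K V)) ∈ Hxi ξ ↔ ξ u v = 0 := by
  have hsw : ∀ a b : V, ξ a b = 0 → ξ b a = 0 := by
    intro a b h
    have := halt (a + b)
    simpa [halt, h] using this
  constructor
  · rintro ⟨a, b, ha, hb, hab, h⟩
    have h2 : (Projectivization.mk K u hu = Projectivization.mk K a ha ∧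
        Projectivization.mk K v hv = Projectivization.mk K b hb) ∨
        (Projectivization.mk K u hu = Projectivization.mk K b hb ∧
        Projectivization.mk K v hv = Projectivization.mk K a ha) := by
      simp only [Multiset.insert_eq_cons] at h
      rw [Multiset.cons_eq_cons] at h
      rcases h with ⟨h1, h2⟩ | ⟨_, cs, h1, h2⟩
      · exact Or.inl ⟨h1, by simpa using h2⟩
      · right
        have c1 : cs = 0 := by
          have := congrArg Multiset.card h1
          simpa using this
        subst c1
        simp at h1 h2
        exact ⟨h2.symm, h1⟩
    simp only [Projectivization.mk_eq_mk_iff'] at h2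
    rcases h2 with ⟨⟨c, rfl⟩, ⟨d, rfl⟩⟩ | ⟨⟨c, rfl⟩, ⟨d, rfl⟩⟩
    · simp [hab]
    · simp [hsw _ _ hab]
  · intro h
    exact ⟨u, v, hu, hv, h, rfl⟩

theorem stmt_11 {K V : Type*} [Field K] [AddCommGroup V] [Module K V]
    (hchar : (2 : K) ≠ 0)
    (ξ : V →ₗ[K] V →ₗ[K] K) (hξ : ξ ≠ 0) (halt : ∀ u : V, ξ u u = 0) :
    IsVeroHyperplane 2 (projLines K V) (Hxi ξ) := by
  refine ⟨?_, ?_, ?_, ?_⟩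
  · rintro m ⟨u, v, hu, hv, h, rfl⟩
    simp [veroPoints]
  · intro h
    apply hξ
    ext u v
    by_cases hu : u = 0
    · simp [hu]
    by_cases hv : v = 0
    · simp [hv]
    have hm : ({Projectivization.mk K u hu, Projectivization.mk K v hv} :
        Multiset (Projectivization K V)) ∈ Hxi ξ := by
      rw [h]; simp [veroPoints]
    simpa using (hxi_mk_iff ξ halt u v hu hv).1 hm
  · rintro _ ⟨r, e, _, hr, hr2, he, ⟨W, hW, rfl⟩, rfl⟩ ⟨_, ⟨⟨x, hx, rfl⟩, hxX⟩, _, ⟨⟨y, hy, rfl⟩, hyX⟩, hne⟩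
    rintro _ ⟨z, hz, rfl⟩
    obtain rfl | rfl : r = 1 ∨ r = 2 := by omega
    · obtain ⟨a, rfl⟩ := Multiset.card_eq_one.1 he
      have hxy : x ≠ y := by rintro rfl; exact hne rfl
      induction a using Projectivization.ind with | h a ha => ?_
      induction x using Projectivization.ind with | h x hx0 => ?_
      induction y using Projectivization.ind with | h y hy0 => ?_
      induction z using Projectivization.ind with | h z hz0 => ?_
      have k1 := (hxi_mk_iff ξ halt a x ha hx0).1 hxX
      have k2 := (hxi_mk_iff ξ halt a y ha hy0).1 hyX
      refine (hxi_mk_iff ξ halt a z ha hz0).2 ?_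
      simp only [Set.mem_setOf_eq, Projectivization.submodule_mk,
        Submodule.span_singleton_le_iff_mem] at hx hy hz
      have hli : LinearIndependent K ![x, y] := by
        rw [LinearIndependent.pair_iff' hx0]
        intro c hc
        apply hxy
        rw [eq_comm, Projectivization.mk_eq_mk_iff']
        exact ⟨c, hc⟩
      have hfin : FiniteDimensional K W := FiniteDimensional.of_finrank_pos (by omega)
      have hle : Submodule.span K (Set.range ![x, y]) ≤ W := by
        rw [Submodule.span_le]
        rintro _ ⟨i, rfl⟩
        fin_cases i
        · exact hx
        · exact hy
      have heq : Submodule.span K (Set.range ![x, y]) = W := by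
        apply Submodule.eq_of_le_of_finrank_eq hle
        rw [finrank_span_eq_card hli, hW]; simp
      have hk : Submodule.span K (Set.range ![x, y]) ≤ LinearMap.ker (ξ a) := by
        rw [Submodule.span_le]
        rintro _ ⟨i, rfl⟩
        fin_cases i
        · exact k1
        · exact k2
      exact hk (heq ▸ hz)
    · obtain rfl : e = 0 := by simpa using he
      induction z using Projectivization.ind with | h z hz0 => ?_
      have := (hxi_mk_iff ξ halt z z hz0 hz0).2 (halt z)
      simpa [Multiset.replicate_succ] using this
  · rintro _ ⟨r, e, _, hr, hr2, he, ⟨W, hW, rfl⟩, rfl⟩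
    have hfin : FiniteDimensional K W := FiniteDimensional.of_finrank_pos (by omega)
    have key : ∀ a : V, ∃ w : V, w ∈ W ∧ w ≠ 0 ∧ ξ a w = 0 := by
      intro a
      have hk : LinearMap.ker ((ξ a).comp W.subtype) ≠ ⊥ := by
        apply LinearMap.ker_ne_bot_of_finrank_lt
        rw [hW]; simp
      obtain ⟨w, hw, hw0⟩ := (Submodule.ne_bot_iff _).1 hk
      exact ⟨w, w.2, by simpa using hw0, hw⟩
    obtain rfl | rfl : r = 1 ∨ r = 2 := by omega
    · obtain ⟨a, rfl⟩ := Multiset.card_eq_one.1 he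
      induction a using Projectivization.ind with | h a ha => ?_
      obtain ⟨w, hw, hw0, h⟩ := key a
      exact ⟨_, ⟨Projectivization.mk K w hw0, by simpa using hw, rfl⟩,
        (hxi_mk_iff ξ halt a w ha hw0).2 h⟩
    · obtain rfl : e = 0 := by simpa using he
      obtain ⟨w, hw, hw0, h⟩ := key 0
      refine ⟨_, ⟨Projectivization.mk K w hw0, by simpa using hw, rfl⟩, ?_⟩
      have := (hxi_mk_iff ξ halt w w hw0 hw0).2 (halt w)
      simpa [Multiset.replicate_succ] using this
end

section
/- Let K be a field, V a K-vector space of dimension at least 2, k ≥ 1, and η a nonzero alternating k-linear form on V. Define H_η = { ⟨u₁⟩ + ⟨u₂⟩ + … + ⟨u_k⟩ : u₁, …, u_k ∈ V∖{0}, η(u₁, …, u_k) = 0 } ⊆ 𝔶_k(points of ℙ(V)) (this set is well defined since η is alternating, so the vanishing of η(u₁,…,u_k) depends only on the multiset of projective points ⟨u₁⟩,…,⟨u_k⟩). Then H_η is a hyperplane of the Veronese space V_k(ℙ(V)): a proper subspace meeting every block. -/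
theorem aux_perm {α : Type*} {k : ℕ} (f g : Fin k → α)
    (h : (List.ofFn f : Multiset α) = (List.ofFn g : Multiset α)) :
    ∃ σ : Equiv.Perm (Fin k), ∀ i, g (σ i) = f i := by
  classical
  rw [← Fin.univ_val_map, ← Fin.univ_val_map] at h
  have hc : ∀ a, Nonempty ({i // f i = a} ≃ {i // g i = a}) := by
    intro a
    apply Nonempty.intro
    apply Fintype.equivOfCardEq
    have h1 := congrArg (Multiset.count a) h
    rw [Multiset.count_map, Multiset.count_map] at h1
    rw [Fintype.card_subtype, Fintype.card_subtype]
    simpa [Finset.card, eq_comm] using h1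
  have e := fun a => Classical.choice (hc a)
  exact ⟨Equiv.ofFiberEquiv e, fun i => Equiv.ofFiberEquiv_map e i⟩

def auxX {K V : Type*} [Field K] [AddCommGroup V] [Module K V] {k : ℕ}
    (η : AlternatingMap K V K (Fin k)) : Set (Multiset (Projectivization K V)) :=
      { m : Multiset (Projectivization K V) |
        ∃ (u : Fin k → V) (hu : ∀ i, u i ≠ 0), η u = 0 ∧
          m = ((List.ofFn fun i => Projectivization.mk K (u i) (hu i)) :
            Multiset (Projectivization K V)) }

theorem aux_mem {K V : Type*} [Field K] [AddCommGroup V] [Module K V] {k : ℕ}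
    (η : AlternatingMap K V K (Fin k)) (u : Fin k → V) (hu : ∀ i, u i ≠ 0) :
    ((List.ofFn fun i => Projectivization.mk K (u i) (hu i)) :
            Multiset (Projectivization K V)) ∈ auxX η ↔ η u = 0 := by
  constructor
  · rintro ⟨w, hw, h0, he⟩
    obtain ⟨σ, hσ⟩ := aux_perm _ _ he
    have : ∀ i, ∃ a : K, a • w (σ i) = u i := fun i =>
      (Projectivization.mk_eq_mk_iff' K _ _ (hu i) (hw (σ i))).1 (hσ i).symm
    choose a ha using this
    have h1 : u = fun i => a i • (w ∘ σ) i := by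
      funext i; exact (ha i).symm
    rw [h1, AlternatingMap.map_smul_univ, AlternatingMap.map_perm, h0]
    simp
  · intro h
    exact ⟨u, hu, h, rfl⟩

theorem aux_lin {K V : Type*} [Field K] [AddCommGroup V] [Module K V] {n : ℕ}
    (η : AlternatingMap K V K (Fin (n + 1))) (e : Multiset (Projectivization K V))
    (he : Multiset.card e = n) :
    ∃ f : V →ₗ[K] K, (∀ x ∈ e, f x.rep = 0) ∧ ∀ x, x ::ₘ e ∈ auxX η ↔ f x.rep = 0 := by
  induction e using Quotient.inductionOn with
  | _ l =>
  simp only [Multiset.quot_mk_to_coe, Multiset.coe_card] at he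
  subst he
  let w : Fin l.length → V := fun i => (l.get i).rep
  let f : V →ₗ[K] K := η.toMultilinearMap.toLinearMap (Fin.cons 0 w) 0
  have hf : ∀ v, f v = η (Fin.cons v w) := by
    intro v
    simp [f, MultilinearMap.toLinearMap]
  refine ⟨f, ?_, ?_⟩
  · intro x hx
    have hx : x ∈ l := by simpa using hx
    obtain ⟨i, hi⟩ := List.get_of_mem hx
    rw [hf]
    refine η.map_eq_zero_of_eq _ (i := 0) (j := i.succ) ?_ (Fin.succ_ne_zero i).symm
    simp [w, ← hi]
  · intro x
    rw [hf]
    have hu : ∀ i, (Fin.cons x.rep w : Fin (l.length + 1) → V) i ≠ 0 := by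
      intro i
      refine Fin.cases ?_ (fun j => ?_) i
      · simpa using x.rep_nonzero
      · simpa [w] using (l.get j).rep_nonzero
    rw [← aux_mem η _ hu]
    have : (List.ofFn fun i => Projectivization.mk K
        ((Fin.cons x.rep w : Fin (l.length + 1) → V) i) (hu i)) = x :: l := by
      rw [List.ofFn_succ]
      simp only [Fin.cons_zero, Fin.cons_succ, Projectivization.mk_rep, w]
      rw [List.ofFn_get]
    rw [this]
    rfl

theorem stmt_15 {K V : Type*} [Field K] [AddCommGroup V] [Module K V]
    (hdim : 2 ≤ Module.rank K V) (k : ℕ) (hk : 1 ≤ k)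
    (η : AlternatingMap K V K (Fin k)) (hη : η ≠ 0) :
    IsVeroHyperplane k (projLines K V)
      { m : Multiset (Projectivization K V) |
        ∃ (u : Fin k → V) (hu : ∀ i, u i ≠ 0), η u = 0 ∧
          m = ((List.ofFn fun i => Projectivization.mk K (u i) (hu i)) :
            Multiset (Projectivization K V)) } := by
  change IsVeroHyperplane k (projLines K V) (auxX η)
  obtain ⟨n, rfl⟩ : ∃ n, k = n + 1 := ⟨k - 1, by omega⟩
  refine ⟨?_, ?_, ?_, ?_⟩
  · rintro m ⟨u, hu, -, rfl⟩
    simp [veroPoints]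
  · intro h
    apply hη
    ext u
    by_contra hne
    have hne : η u ≠ 0 := hne
    have hu : ∀ i, u i ≠ 0 := fun i hi => hne (η.map_coord_zero i hi)
    apply hne
    rw [← aux_mem η u hu, h]
    simp [veroPoints]
  · rintro _ ⟨r, e, _, hr, hrk, hc, ⟨W, hW, rfl⟩, rfl⟩ ⟨p, ⟨⟨x, hx, rfl⟩, hpX⟩, q, ⟨⟨y, hy, rfl⟩, hqX⟩, hpq⟩
    rintro _ ⟨z, hz, rfl⟩
    obtain ⟨s, rfl⟩ : ∃ s, r = s + 1 := ⟨r - 1, by omega⟩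
    simp only [Multiset.replicate_succ, Multiset.add_cons] at *
    rcases Nat.eq_zero_or_pos s with rfl | hs
    · obtain ⟨f, -, hf⟩ := aux_lin η e (by omega)
      simp only [Multiset.replicate_zero, add_zero] at *
      rw [hf] at *
      have hxy : x ≠ y := by rintro rfl; exact hpq rfl
      have hli := Projectivization.linearIndependent_pair_iff_ne.2 hxy
      have : FiniteDimensional K W := Module.finite_of_finrank_pos (by omega)
      have hs : Submodule.span K (Set.range ![x.rep, y.rep]) = W := by
        apply Submodule.eq_of_le_of_finrank_eq
        · rw [Submodule.span_le]
          rintro _ ⟨i, rfl⟩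
          fin_cases i
          · exact hx (by rw [Projectivization.submodule_eq]; exact Submodule.mem_span_singleton_self _)
          · exact hy (by rw [Projectivization.submodule_eq]; exact Submodule.mem_span_singleton_self _)
        · rw [finrank_span_eq_card hli, hW]; simp
      have hzW : z.rep ∈ W :=
        hz (by rw [Projectivization.submodule_eq]; exact Submodule.mem_span_singleton_self _)
      have hle : W ≤ LinearMap.ker f := by
        rw [← hs, Submodule.span_le]
        rintro _ ⟨i, rfl⟩
        fin_cases i
        · exact hpX
        · exact hqX
      exact hle hzW
    · obtain ⟨f, hf0, hf⟩ := aux_lin η (e + Multiset.replicate s z) (by simp; omega)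
      rw [hf]
      apply hf0
      simp [Multiset.mem_replicate]; omega
  · rintro _ ⟨r, e, _, hr, hrk, hc, ⟨W, hW, rfl⟩, rfl⟩
    have : FiniteDimensional K W := Module.finite_of_finrank_pos (by omega)
    obtain ⟨s, rfl⟩ : ∃ s, r = s + 1 := ⟨r - 1, by omega⟩
    rcases Nat.eq_zero_or_pos s with rfl | hs
    · obtain ⟨f, -, hf⟩ := aux_lin η e (by omega)
      have hk : LinearMap.ker (f.domRestrict W) ≠ ⊥ :=
        LinearMap.ker_ne_bot_of_finrank_lt (by rw [hW]; simp)
      obtain ⟨v, hv, hv0⟩ := Submodule.exists_mem_ne_zero_of_ne_bot hk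
      have hv0' : (v : V) ≠ 0 := by simpa using hv0
      refine ⟨_, ⟨Projectivization.mk K (v : V) hv0', ?_, rfl⟩, ?_⟩
      · change Projectivization.submodule _ ≤ W
        rw [Projectivization.submodule_mk, Submodule.span_singleton_le_iff_mem]
        exact v.2
      · simp only [Multiset.replicate_succ, Multiset.add_cons, Multiset.replicate_zero, add_zero, zero_add]
        rw [hf]
        obtain ⟨a, ha⟩ := Projectivization.exists_smul_eq_mk_rep K (v : V) hv0'
        have hv : f v = 0 := hv
        rw [← ha, Units.smul_def, map_smul, hv, smul_zero]
    · have : Nontrivial W := Module.nontrivial_of_finrank_pos (R := K) (by omega)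
      obtain ⟨v, hv0⟩ := exists_ne (0 : W)
      have hv0' : (v : V) ≠ 0 := by simpa using hv0
      refine ⟨_, ⟨Projectivization.mk K (v : V) hv0', ?_, rfl⟩, ?_⟩
      · change Projectivization.submodule _ ≤ W
        rw [Projectivization.submodule_mk, Submodule.span_singleton_le_iff_mem]
        exact v.2
      · simp only [Multiset.replicate_succ, Multiset.add_cons]
        obtain ⟨f, hf0, hf⟩ := aux_lin η
          (e + Multiset.replicate s (Projectivization.mk K (v : V) hv0')) (by simp; omega)
        rw [hf]
        apply hf0
        simp [Multiset.mem_replicate]; omega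
end

section
/- Let K be a field with char K ≠ 2 and V a K-vector space with dim_K V ≥ 4. Let ω be a nonzero alternating bilinear form on V and let Q(ω) be the associated symplectic polar space: its points are all points of ℙ(V) and its lines are the projective lines L such that ω(u,v) = 0 for all u, v in the 2-dimensional subspace corresponding to L (totally ω-isotropic lines). Let ξ be a nonzero alternating bilinear form on V and H_ξ = { ⟨u⟩ + ⟨v⟩ : u, v ∈ V∖{0}, ξ(u,v) = 0 }. Then H_ξ is a hyperplane of the Veronese space V₂(Q(ω)): a proper subspace of V₂(Q(ω)) meeting every block of V₂(Q(ω)). -/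
def polarLines (K V : Type*) [Field K] [AddCommGroup V] [Module K V]
    (ω : V →ₗ[K] V →ₗ[K] K) : Set (Set (Projectivization K V)) :=
  { L | ∃ W : Submodule K V, Module.finrank K ↥W = 2 ∧
      (∀ u ∈ W, ∀ v ∈ W, ω u v = 0) ∧
      L = { p : Projectivization K V | p.submodule ≤ W } }

theorem aux_mem_s17 {K V : Type*} [Field K] [AddCommGroup V] [Module K V]
    (ξ : V →ₗ[K] V →ₗ[K] K) (haltξ : ∀ u : V, ξ u u = 0) (p q : Projectivization K V) :
    ({p, q} : Multiset (Projectivization K V)) ∈ Hxi ξ ↔ ξ p.rep q.rep = 0 := by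
  have hsw : ∀ a b, ξ a b = 0 → ξ b a = 0 := by
    intro a b h
    have := haltξ (a + b)
    simpa [haltξ, h] using this
  have key : ∀ (u v : V) (hu : u ≠ 0) (hv : v ≠ 0), ξ u v = 0 →
      ξ (Projectivization.mk K u hu).rep (Projectivization.mk K v hv).rep = 0 := by
    intro u v hu hv h
    obtain ⟨a, ha⟩ := Projectivization.exists_smul_eq_mk_rep K u hu
    obtain ⟨b, hb⟩ := Projectivization.exists_smul_eq_mk_rep K v hv
    rw [← ha, ← hb, Units.smul_def, Units.smul_def]
    simp [h]
  constructor
  · rintro ⟨u, v, hu, hv, h, he⟩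
    have he2 : p ::ₘ {q} = Projectivization.mk K u hu ::ₘ {Projectivization.mk K v hv} := he
    rw [Multiset.cons_eq_cons] at he2
    rcases he2 with ⟨h1, h2⟩ | ⟨_, cs, h1, h2⟩
    · rw [h1, Multiset.singleton_inj.1 h2]
      exact key _ _ _ _ h
    · have c0 : cs = 0 := by
        have := congrArg Multiset.card h1
        simpa using this
      subst c0
      have e1 : q = Projectivization.mk K u hu := by simpa using h1
      have e2 : Projectivization.mk K v hv = p := by simpa using h2
      rw [e1, ← e2]
      exact hsw _ _ (key _ _ _ _ h)
  · intro h
    exact ⟨p.rep, q.rep, p.rep_nonzero, q.rep_nonzero, h, by simp⟩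

theorem aux_rep_mem {K V : Type*} [Field K] [AddCommGroup V] [Module K V]
    (W : Submodule K V) (p : Projectivization K V) : p.submodule ≤ W ↔ p.rep ∈ W := by
  rw [Projectivization.submodule_eq, Submodule.span_singleton_le_iff_mem]

theorem stmt_17 {K V : Type*} [Field K] [AddCommGroup V] [Module K V]
    (hchar : (2 : K) ≠ 0) (hdim : 4 ≤ Module.rank K V)
    (ω : V →ₗ[K] V →ₗ[K] K) (hω : ω ≠ 0) (haltω : ∀ u : V, ω u u = 0)
    (ξ : V →ₗ[K] V →ₗ[K] K) (hξ : ξ ≠ 0) (haltξ : ∀ u : V, ξ u u = 0) :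
    IsVeroHyperplane 2 (polarLines K V ω) (Hxi ξ) := by
  have mem := aux_mem_s17 ξ haltξ
  refine ⟨?_, ?_, ?_, ?_⟩
  · rintro m ⟨u, v, hu, hv, h, rfl⟩
    simp [veroPoints]
  · intro h
    apply hξ
    ext u v
    by_contra hne
    have hne : ξ u v ≠ 0 := hne
    have hu : u ≠ 0 := by rintro rfl; simp at hne
    have hv : v ≠ 0 := by rintro rfl; simp at hne
    have hm : ({Projectivization.mk K u hu, Projectivization.mk K v hv} :
        Multiset (Projectivization K V)) ∈ Hxi ξ := by
      rw [h]; simp [veroPoints]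
    rw [mem] at hm
    obtain ⟨a, ha⟩ := Projectivization.exists_smul_eq_mk_rep K u hu
    obtain ⟨b, hb⟩ := Projectivization.exists_smul_eq_mk_rep K v hv
    rw [← ha, ← hb, Units.smul_def, Units.smul_def] at hm
    simp [hne] at hm
  · rintro Bl ⟨r, e, B, hr0, hr2, hc, ⟨W, hW, _, rfl⟩, rfl⟩ ⟨m, ⟨hm, hmX⟩, n, ⟨hn, hnX⟩, hmn⟩
    obtain rfl | rfl : r = 1 ∨ r = 2 := by omega
    · obtain ⟨p, rfl⟩ := Multiset.card_eq_one.1 hc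
      obtain ⟨x, hx, rfl⟩ := hm
      obtain ⟨y, hy, rfl⟩ := hn
      rintro _ ⟨z, hz, rfl⟩
      have hxy : x ≠ y := by rintro rfl; exact hmn rfl
      change ({p, x} : Multiset _) ∈ _ at hmX
      change ({p, y} : Multiset _) ∈ _ at hnX
      change ({p, z} : Multiset _) ∈ _
      rw [mem] at *
      have hx := (aux_rep_mem W x).1 hx
      have hy := (aux_rep_mem W y).1 hy
      have hz := (aux_rep_mem W z).1 hz
      have hli : LinearIndependent K ![x.rep, y.rep] := by
        have := Projectivization.independent_iff.1
          ((Projectivization.independent_pair_iff_ne x y).2 hxy)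
        convert this using 1
        ext i
        fin_cases i <;> rfl
      have hfr := finrank_span_eq_card hli
      have : FiniteDimensional K W := Module.finite_of_finrank_pos (by omega)
      have hle : Submodule.span K (Set.range ![x.rep, y.rep]) ≤ W := by
        rw [Submodule.span_le]
        rintro _ ⟨i, rfl⟩
        fin_cases i
        · exact hx
        · exact hy
      have heq := Submodule.eq_of_le_of_finrank_eq hle (by rw [hfr, hW]; simp)
      have hk : Submodule.span K (Set.range ![x.rep, y.rep]) ≤ LinearMap.ker (ξ p.rep) := by
        rw [Submodule.span_le]
        rintro _ ⟨i, rfl⟩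
        fin_cases i
        · exact hmX
        · exact hnX
      rw [heq] at hk
      exact hk hz
    · have : e = 0 := by simpa using hc
      subst this
      rintro _ ⟨z, hz, rfl⟩
      rw [zero_add]
      change ({z, z} : Multiset _) ∈ _
      rw [mem]
      exact haltξ _
  · rintro Bl ⟨r, e, B, hr0, hr2, hc, ⟨W, hW, _, rfl⟩, rfl⟩
    have hfd : FiniteDimensional K W := Module.finite_of_finrank_pos (by omega)
    have hex : ∀ f : V →ₗ[K] K, ∃ z : Projectivization K V, z.submodule ≤ W ∧ f z.rep = 0 := by
      intro f
      have hb : LinearMap.ker (f.comp W.subtype) ≠ ⊥ := by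
        apply LinearMap.ker_ne_bot_of_finrank_lt
        rw [hW]; simp
      obtain ⟨w, hw, hw0⟩ := Submodule.exists_mem_ne_zero_of_ne_bot hb
      have hw0' : (w : V) ≠ 0 := by simpa using hw0
      obtain ⟨a, ha⟩ := Projectivization.exists_smul_eq_mk_rep K (w : V) hw0'
      refine ⟨Projectivization.mk K (w : V) hw0', ?_, ?_⟩
      · rw [aux_rep_mem, ← ha]
        exact W.smul_mem _ w.2
      · rw [← ha, Units.smul_def, map_smul]
        have : f (w : V) = 0 := hw
        simp [this]
    obtain rfl | rfl : r = 1 ∨ r = 2 := by omega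
    · obtain ⟨p, rfl⟩ := Multiset.card_eq_one.1 hc
      obtain ⟨z, hz, hz0⟩ := hex (ξ p.rep)
      exact ⟨_, ⟨z, hz, rfl⟩, (mem p z).2 hz0⟩
    · have : e = 0 := by simpa using hc
      subst this
      obtain ⟨z, hz, _⟩ := hex 0
      refine ⟨_, ⟨z, hz, rfl⟩, ?_⟩
      rw [zero_add]
      exact (mem z z).2 (haltξ _)
end

section
/- Let A₀ = (S, ℒ₀, ∥₀) be an affine partial linear space and let k > 1. Define a relation ∥ on the blocks of V_k(S, ℒ₀) by: B₁ ∥ B₂ iff there are e₁, e₂, r₁, r₂ and lines L₁, L₂ ∈ ℒ₀ with L₁ ∥₀ L₂ such that B_i = {e_i + r_i·x : x ∈ L_i} for i = 1, 2. Then: (1) ∥ is an equivalence relation on the blocks of V_k(S, ℒ₀) and each of its equivalence classes covers the point set 𝔶_k(S); (2) for every block L and every point f ∈ 𝔶_k(S), each of the k leaves of V_k(S, ℒ₀) passing through f contains exactly one block through f that is ∥-parallel to L; (3) consequently ∥ is not a partial parallelism: there exist distinct blocks B₁ ∥ B₂ with B₁ ∩ B₂ ≠ ∅. -/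
def VPar {S : Type*} (k : ℕ) (ℒ : Set (Set S)) (par : Set S → Set S → Prop)
    (B₁ B₂ : Set (Multiset S)) : Prop :=
  ∃ (r₁ r₂ : ℕ) (e₁ e₂ : Multiset S) (L₁ L₂ : Set S),
    0 < r₁ ∧ r₁ ≤ k ∧ Multiset.card e₁ = k - r₁ ∧
    0 < r₂ ∧ r₂ ≤ k ∧ Multiset.card e₂ = k - r₂ ∧
    L₁ ∈ ℒ ∧ L₂ ∈ ℒ ∧ par L₁ L₂ ∧ B₁ = veroBlock e₁ r₁ L₁ ∧ B₂ = veroBlock e₂ r₂ L₂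

theorem vero_pt {S : Type*} {e e' : Multiset S} {r r' : ℕ} (hr : 0 < r) {a b x y : S}
    (hab : a ≠ b) (h1 : e + Multiset.replicate r a = e' + Multiset.replicate r' x)
    (h2 : e + Multiset.replicate r b = e' + Multiset.replicate r' y) :
    e = e' ∧ r = r' ∧ a = x := by
  classical
  have c1 := congrArg (Multiset.count a) h1
  have c2 := congrArg (Multiset.count a) h2
  simp only [Multiset.count_add, Multiset.count_replicate] at c1 c2
  have hx : a = x := by
    by_contra hne
    grind
  have hrr : r = r' := by
    grind
  subst hx hrr
  exact ⟨by simpa using h1, rfl, rfl⟩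

theorem vero_sub {S : Type*} {e e' : Multiset S} {r r' : ℕ} (hr : 0 < r) {L L' : Set S}
    (h3 : AtLeastThree L) (h : veroBlock e r L ⊆ veroBlock e' r' L') :
    e = e' ∧ r = r' ∧ L ⊆ L' := by
  have key : ∀ a ∈ L, e = e' ∧ r = r' ∧ a ∈ L' := by
    intro a ha
    obtain ⟨b, hb, hab⟩ : ∃ b ∈ L, a ≠ b := by
      obtain ⟨u, v, w, hu, hv, hw, huv, -, -⟩ := h3
      by_cases hau : a = u
      · exact ⟨v, hv, hau ▸ huv⟩
      · exact ⟨u, hu, hau⟩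
    obtain ⟨x, hx, h1⟩ := h ⟨a, ha, rfl⟩
    obtain ⟨y, hy, h2⟩ := h ⟨b, hb, rfl⟩
    obtain ⟨p, q, rfl⟩ := vero_pt hr hab h1 h2
    exact ⟨p, q, hx⟩
  obtain ⟨u, v, w, hu, -⟩ := id h3
  exact ⟨(key u hu).1, (key u hu).2.1, fun a ha => (key a ha).2.2⟩

theorem vero_inj {S : Type*} {e e' : Multiset S} {r r' : ℕ} (hr : 0 < r) (hr' : 0 < r')
    {L L' : Set S} (h3 : AtLeastThree L) (h3' : AtLeastThree L')
    (h : veroBlock e r L = veroBlock e' r' L') : e = e' ∧ r = r' ∧ L = L' := by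
  obtain ⟨p, q, s⟩ := vero_sub hr h3 h.subset
  exact ⟨p, q, s.antisymm (vero_sub hr' h3' h.symm.subset).2.2⟩

theorem stmt_18 {S : Type*} (ℒ : Set (Set S)) (par : Set S → Set S → Prop)
    (hPLS : IsPLS ℒ)
    (hmem : ∀ L M : Set S, par L M → L ∈ ℒ ∧ M ∈ ℒ)
    (hrefl : ∀ L ∈ ℒ, par L L)
    (hsymm : ∀ L M : Set S, par L M → par M L)
    (htrans : ∀ L M N : Set S, par L M → par M N → par L N)
    (hdisj : ∀ L M : Set S, par L M → L ≠ M → L ∩ M = ∅)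
    (hcover : ∀ L ∈ ℒ, ∀ p : S, ∃ M, par L M ∧ p ∈ M)
    (k : ℕ) (hk : 1 < k) :
    ((∀ B ∈ veroBlocks k ℒ, VPar k ℒ par B B) ∧
     (∀ B₁ B₂ : Set (Multiset S), VPar k ℒ par B₁ B₂ → VPar k ℒ par B₂ B₁) ∧
     (∀ B₁ B₂ B₃ : Set (Multiset S),
        VPar k ℒ par B₁ B₂ → VPar k ℒ par B₂ B₃ → VPar k ℒ par B₁ B₃) ∧
     (∀ B ∈ veroBlocks k ℒ, ∀ f ∈ veroPoints S k, ∃ B', VPar k ℒ par B B' ∧ f ∈ B')) ∧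
    (∀ B ∈ veroBlocks k ℒ, ∀ f ∈ veroPoints S k, ∀ T ∈ veroLeaves S k, f ∈ T →
      ∃! B' : Set (Multiset S),
        B' ∈ veroBlocks k ℒ ∧ f ∈ B' ∧ B' ⊆ T ∧ VPar k ℒ par B' B) ∧
    (∃ B₁ B₂ : Set (Multiset S), B₁ ∈ veroBlocks k ℒ ∧ B₂ ∈ veroBlocks k ℒ ∧
      B₁ ≠ B₂ ∧ VPar k ℒ par B₁ B₂ ∧ (B₁ ∩ B₂).Nonempty) := by
  obtain ⟨⟨L0, hL0⟩, h3, -⟩ := hPLS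
  refine ⟨⟨?_, ?_, ?_, ?_⟩, ?_, ?_⟩
  · rintro B ⟨r, e, L, h0, h1, h2, hL, rfl⟩
    exact ⟨r, r, e, e, L, L, h0, h1, h2, h0, h1, h2, hL, hL, hrefl L hL, rfl, rfl⟩
  · rintro B₁ B₂ ⟨r, r', e, e', L, L', h0, h1, h2, h0', h1', h2', hL, hL', hp, rfl, rfl⟩
    exact ⟨r', r, e', e, L', L, h0', h1', h2', h0, h1, h2, hL', hL, hsymm _ _ hp, rfl, rfl⟩
  · rintro B₁ B₂ B₃ ⟨r, r', e, e', L, L', h0, h1, h2, h0', h1', h2', hL, hL', hp, rfl, rfl⟩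
      ⟨s, s', d, d', M, M', g0, g1, g2, g0', g1', g2', hM, hM', hq, hE, rfl⟩
    obtain ⟨-, -, rfl⟩ := vero_inj h0' g0 (h3 _ hL') (h3 _ hM) hE
    exact ⟨r, s', e, d', L, M', h0, h1, h2, g0', g1', g2', hL, hM', htrans _ _ _ hp hq, rfl, rfl⟩
  · rintro B ⟨r, e, L, h0, h1, h2, hL, rfl⟩ f hf
    have hf : Multiset.card f = k := hf
    obtain ⟨a, ha⟩ := Multiset.card_pos_iff_exists_mem.1 (by omega : 0 < Multiset.card f)
    obtain ⟨t, rfl⟩ := Multiset.exists_cons_of_mem ha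
    obtain ⟨M, hM, haM⟩ := hcover L hL a
    rw [Multiset.card_cons] at hf
    refine ⟨veroBlock t 1 M, ⟨r, 1, e, t, L, M, h0, h1, h2, one_pos, hk.le, by omega, hL,
      (hmem _ _ hM).2, hM, rfl, rfl⟩, a, haM, ?_⟩
    simp [Multiset.add_comm t]
  · rintro B ⟨r, e, L, h0, h1, h2, hL, rfl⟩ f hf T ⟨s, d, g0, g1, g2, rfl⟩ ⟨y, -, rfl⟩
    obtain ⟨M, hM, hyM⟩ := hcover L hL y
    have hM' := (hmem _ _ hM).2
    refine ⟨veroBlock d s M, ⟨⟨s, d, M, g0, g1, g2, hM', rfl⟩, ⟨y, hyM, rfl⟩, ?_,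
      ⟨s, r, d, e, M, L, g0, g1, g2, h0, h1, h2, hM', hL, hsymm _ _ hM, rfl, rfl⟩⟩, ?_⟩
    · rintro _ ⟨x, -, rfl⟩
      exact ⟨x, trivial, rfl⟩
    · rintro B' ⟨-, hfB, hsub, r₁, r₂, e₁, e₂, L₁, L₂, a0, a1, a2, b0, b1, b2, hL1, hL2, hp, rfl, hE⟩
      obtain ⟨rfl, rfl, -⟩ := vero_sub a0 (h3 _ hL1) hsub
      obtain ⟨-, -, rfl⟩ := vero_inj h0 b0 (h3 _ hL) (h3 _ hL2) hE
      obtain ⟨z, hz, hzy⟩ := hfB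
      have hzy' : y = z := by
        have := Multiset.replicate_right_injective (by omega : r₁ ≠ 0) (add_left_cancel hzy)
        exact this
      subst hzy'
      by_cases hne : L₁ = M
      · rw [hne]
      · have := hdisj _ _ (htrans _ _ _ hp hM) hne
        exact absurd (this ▸ (⟨hz, hyM⟩ : y ∈ L₁ ∩ M)) (Set.notMem_empty y)
  · obtain ⟨p, -, -, hp, -⟩ := id (h3 _ hL0)
    refine ⟨veroBlock 0 k L0, veroBlock (Multiset.replicate (k-1) p) 1 L0,
      ⟨k, 0, L0, by omega, le_rfl, by simp, hL0, rfl⟩,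
      ⟨1, _, L0, one_pos, hk.le, by simp, hL0, rfl⟩, ?_,
      ⟨k, 1, 0, _, L0, L0, by omega, le_rfl, by simp, one_pos, hk.le, by simp, hL0, hL0,
        hrefl _ hL0, rfl, rfl⟩, Multiset.replicate k p, ⟨p, hp, by simp⟩, ⟨p, hp, ?_⟩⟩
    · intro h
      have := (vero_inj (by omega) one_pos (h3 _ hL0) (h3 _ hL0) h).2.1
      omega
    · rw [← Multiset.replicate_add]
      congr 1
      omega
end

section
/- Let k > 1 and let A₀ = (S, ℒ₀, ∥₀) be a finite affine partial linear space in which every line has the same size κ and every ∥₀-equivalence class has the same size δ₀. Then there is no equivalence relation ∥ on the blocks of V_k(S, ℒ₀) such that: (i) distinct ∥-parallel blocks are disjoint; (ii) every ∥-equivalence class covers the point set 𝔶_k(S); (iii) all ∥-equivalence classes have the same cardinality; and (iv) every leaf of V_k(S, ℒ₀) is closed under ∥, in the sense that for every block B, every leaf T, and every point f ∈ T, there is a block B' with f ∈ B' ⊆ T and B' ∥ B. -/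
theorem stmt_19 {S : Type*} [Fintype S] (ℒ : Set (Set S)) (par₀ : Set S → Set S → Prop)
    (hPLS : IsPLS ℒ)
    (hmem : ∀ L M : Set S, par₀ L M → L ∈ ℒ ∧ M ∈ ℒ)
    (hrefl : ∀ L ∈ ℒ, par₀ L L)
    (hsymm : ∀ L M : Set S, par₀ L M → par₀ M L)
    (htrans : ∀ L M N : Set S, par₀ L M → par₀ M N → par₀ L N)
    (hdisj : ∀ L M : Set S, par₀ L M → L ≠ M → L ∩ M = ∅)
    (hcover : ∀ L ∈ ℒ, ∀ p : S, ∃ M, par₀ L M ∧ p ∈ M)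
    (κ δ₀ : ℕ)
    (hκ : ∀ L ∈ ℒ, L.ncard = κ)
    (hδ₀ : ∀ L ∈ ℒ, { M : Set S | par₀ L M }.ncard = δ₀)
    (k : ℕ) (hk : 1 < k) :
    ¬ ∃ par : Set (Multiset S) → Set (Multiset S) → Prop,
      (∀ B M : Set (Multiset S), par B M → B ∈ veroBlocks k ℒ ∧ M ∈ veroBlocks k ℒ) ∧
      (∀ B ∈ veroBlocks k ℒ, par B B) ∧
      (∀ B M : Set (Multiset S), par B M → par M B) ∧
      (∀ B M N : Set (Multiset S), par B M → par M N → par B N) ∧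
      (∀ B M : Set (Multiset S), par B M → B ≠ M → B ∩ M = ∅) ∧
      (∀ B ∈ veroBlocks k ℒ, ∀ f ∈ veroPoints S k, ∃ M, par B M ∧ f ∈ M) ∧
      (∃ N : ℕ, ∀ B ∈ veroBlocks k ℒ, { M : Set (Multiset S) | par B M }.ncard = N) ∧
      (∀ B ∈ veroBlocks k ℒ, ∀ T ∈ veroLeaves S k, ∀ f ∈ T,
        ∃ M : Set (Multiset S), f ∈ M ∧ M ⊆ T ∧ par M B) := by
  rintro ⟨par, hm, hr, hs, ht, hd, -, -, hleaf⟩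
  obtain ⟨⟨L, hL⟩, h3, -⟩ := hPLS
  obtain ⟨p, -⟩ := h3 L hL
  have hB : veroBlock 0 k L ∈ veroBlocks k ℒ := ⟨k, 0, L, by omega, le_rfl, by simp, hL, rfl⟩
  have hT1 : veroBlock (0 : Multiset S) k Set.univ ∈ veroLeaves S k :=
    ⟨k, 0, by omega, le_rfl, by simp, rfl⟩
  have hT2 : veroBlock (Multiset.replicate (k-1) p) 1 Set.univ ∈ veroLeaves S k :=
    ⟨1, _, by omega, by omega, by simp, rfl⟩
  obtain ⟨M, fM, hMT, hMB⟩ := hleaf _ hB _ hT1 (Multiset.replicate k p) ⟨p, trivial, by simp⟩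
  obtain ⟨M', fM', hMT', hMB'⟩ := hleaf _ hB _ hT2 (Multiset.replicate k p)
    ⟨p, trivial, by rw [← Multiset.replicate_add]; congr 1; omega⟩
  have hMM : M = M' := by
    by_contra hne
    have h := hd M M' (ht _ _ _ hMB (hs _ _ hMB')) hne
    have : Multiset.replicate k p ∈ M ∩ M' := ⟨fM, fM'⟩
    rw [h] at this
    exact this
  subst hMM
  have key : ∀ m ∈ M, m = Multiset.replicate k p := by
    intro m hmM
    obtain ⟨x, -, hx⟩ := hMT hmM
    obtain ⟨y, -, hy⟩ := hMT' hmM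
    have hp : p ∈ m := by
      rw [hy, Multiset.mem_add]
      exact Or.inl (Multiset.mem_replicate.2 ⟨by omega, rfl⟩)
    rw [zero_add] at hx
    rw [hx] at hp ⊢
    rw [Multiset.eq_of_mem_replicate hp]
  obtain ⟨r, e, B, hr0, -, -, hBL, rfl⟩ := (hm _ _ hMB).1
  obtain ⟨a, b, -, ha, hb, -, hab, -⟩ := h3 B hBL
  have h := (key _ ⟨a, ha, rfl⟩).trans (key _ ⟨b, hb, rfl⟩).symm
  have h := add_left_cancel h
  have h2 : a ∈ Multiset.replicate r b := by
    rw [← h]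
    exact Multiset.mem_replicate.2 ⟨by omega, rfl⟩
  exact hab (Multiset.eq_of_mem_replicate h2)
end
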